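/- arXiv:0907.3920 — 11 statements merged into one kernel-verified Lean document; each statement's English description precedes it below -/
import Mathlib

section
/- Let ε > 0 with ε² ≤ 1/3, and let N, M be positive integers with M³ ≥ 32·N/ε⁴. Let p be an ε-nonuniform probability distribution on Fin N such that p i ≤ 1/(2M²) for every i (no big elements). Then, for M independent samples from p, Prob[ p_S ≥ (1 + ε²/2)·M/N ] ≥ 3/4. -/
open scoped Classical

/-!
By Cauchy–Schwarz, an `ε`-nonuniform distribution `p` on `N` points has collision probability
`∑ i, p i ^ 2 = (1 + δ) / N` with `δ ≥ ε ^ 2`. The statistic `p_S` is a sum of `M` independent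
copies of `p i`, where `i` has distribution `p`; its mean is `M (1 + δ) / N`, which exceeds the
threshold `(1 + ε ^ 2 / 2) M / N` by at least `M δ / (2 N)`. Since `p ≤ 1 / (2 M ^ 2)`, its variance
is at most `(1 + δ) / (2 M N)`, and the one-sided Chebyshev inequality concludes; the constants fit
because `ε ≤ 2`, the `L¹`-distance of two distributions being at most `2`.
-/

open MeasureTheory ProbabilityTheory

section Probability

variable {Ω : Type*} [MeasurableSpace Ω] {μ : Measure Ω} [IsProbabilityMeasure μ] {X : Ω → ℝ}

lemma integral_sub_const_sq_eq_variance_add_sq (hX : MemLp X 2 μ) (a : ℝ) :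
    ∫ ω, (X ω - a) ^ 2 ∂μ = Var[X; μ] + (μ[X] - a) ^ 2 := by
  have hmean : ∫ ω, (X ω - a) ∂μ = μ[X] - a := by
    simp [integral_sub (hX.integrable one_le_two) (integrable_const a)]
  have hvar : Var[X; μ] = ∫ ω, (X ω - a) ^ 2 ∂μ - (μ[X] - a) ^ 2 := by
    rw [← variance_sub_const hX.aestronglyMeasurable a, ← hmean]
    exact variance_eq_sub (hX.sub (memLp_const a))
  linarith

lemma measureReal_le_integral_sub_le_variance_div (hX : MemLp X 2 μ) {t : ℝ} (ht : 0 < t) :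
    μ.real {ω | X ω ≤ μ[X] - t} ≤ Var[X; μ] / (Var[X; μ] + t ^ 2) := by
  have hv : 0 ≤ Var[X; μ] := variance_nonneg X μ
  set v := Var[X; μ]
  set m := μ[X]
  -- Markov's inequality for `(X - a) ^ 2` with `a = m + v / t`, which optimizes the bound.
  have hsub : {ω | X ω ≤ m - t} ⊆ {ω | (t + v / t) ^ 2 ≤ (X ω - (m + v / t)) ^ 2} := by
    intro ω (hω : X ω ≤ m - t)
    change (t + v / t) ^ 2 ≤ (X ω - (m + v / t)) ^ 2
    rw [← neg_sq (X ω - _)]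
    gcongr
    linarith
  have hmarkov : (t + v / t) ^ 2 * μ.real {ω | X ω ≤ m - t} ≤ v + (v / t) ^ 2 :=
    calc (t + v / t) ^ 2 * μ.real {ω | X ω ≤ m - t}
      _ ≤ (t + v / t) ^ 2 * μ.real {ω | (t + v / t) ^ 2 ≤ (X ω - (m + v / t)) ^ 2} :=
        mul_le_mul_of_nonneg_left (measureReal_mono hsub) (sq_nonneg _)
      _ ≤ ∫ ω, (X ω - (m + v / t)) ^ 2 ∂μ :=
        mul_meas_ge_le_integral_of_nonneg (.of_forall fun ω ↦ sq_nonneg _)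
          (hX.sub (memLp_const _)).integrable_sq _
      _ = v + (v / t) ^ 2 := by
        rw [integral_sub_const_sq_eq_variance_add_sq hX]
        ring
  calc μ.real {ω | X ω ≤ m - t}
    _ ≤ (v + (v / t) ^ 2) / (t + v / t) ^ 2 := (le_div_iff₀' (by positivity)).mpr hmarkov
    _ = v / (v + t ^ 2) := by
      field_simp
      ring

lemma sq_div_variance_add_sq_le_measureReal (hX : MemLp X 2 μ) {t : ℝ} (ht : 0 < t) :
    t ^ 2 / (Var[X; μ] + t ^ 2) ≤ μ.real {ω | μ[X] - t ≤ X ω} := by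
  have hcover : μ.real Set.univ ≤ μ.real {ω | X ω ≤ μ[X] - t} + μ.real {ω | μ[X] - t ≤ X ω} :=
    (measureReal_mono fun ω _ ↦ le_total (X ω) _).trans (measureReal_union_le _ _)
  rw [probReal_univ] at hcover
  have hsum : Var[X; μ] / (Var[X; μ] + t ^ 2) + t ^ 2 / (Var[X; μ] + t ^ 2) = 1 := by
    have hv : 0 ≤ Var[X; μ] := variance_nonneg X μ
    rw [← add_div, div_self (by positivity)]
  linarith [measureReal_le_integral_sub_le_variance_div hX ht]

variable {κ : Type*} [Fintype κ]

lemma integral_sum_comp_eval (hX : Integrable X μ) :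
    ∫ s : κ → Ω, ∑ a, X (s a) ∂(Measure.pi fun _ ↦ μ) = Fintype.card κ * μ[X] := by
  rw [integral_finsetSum _ fun a _ ↦ integrable_comp_eval (i := a) hX]
  simp [integral_comp_eval (μ := fun _ : κ ↦ μ) hX.aestronglyMeasurable]

lemma variance_sum_comp_eval (hX : MemLp X 2 μ) :
    Var[fun s : κ → Ω ↦ ∑ a, X (s a); Measure.pi fun _ ↦ μ] = Fintype.card κ * Var[X; μ] := by
  have h := variance_sum_pi (μ := fun _ : κ ↦ μ) (X := fun _ ↦ X) fun _ ↦ hX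
  simpa [Finset.sum_fn] using h

end Probability

section FiniteDistribution

variable {ι : Type*} [Fintype ι]

/-- The probability that two independent samples from `p` coincide; it is the mean of `p i` when
`i` is sampled from `p`. -/
def collisionProb (p : ι → ℝ) : ℝ := ∑ i, p i ^ 2

lemma collisionProb_nonneg (p : ι → ℝ) : 0 ≤ collisionProb p :=
  Finset.sum_nonneg fun i _ ↦ sq_nonneg (p i)

lemma card_mul_sum_sub_one_div_card_sq {p : ι → ℝ} (hsum : ∑ i, p i = 1) :
    Fintype.card ι * ∑ i, (p i - 1 / Fintype.card ι) ^ 2 =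
      Fintype.card ι * collisionProb p - 1 := by
  have : Nonempty ι := not_isEmpty_iff.mp fun _ ↦ by simp at hsum
  simp only [sub_sq, Finset.sum_add_distrib, Finset.sum_sub_distrib, ← Finset.sum_mul,
    ← Finset.mul_sum, hsum, collisionProb, Finset.sum_const, Finset.card_univ, nsmul_eq_mul]
  field_simp
  ring

lemma one_add_sq_sum_abs_le_card_mul_collisionProb {p : ι → ℝ} (hsum : ∑ i, p i = 1) :
    1 + (∑ i, |p i - 1 / Fintype.card ι|) ^ 2 ≤ Fintype.card ι * collisionProb p := by
  have hcs := sq_sum_le_card_mul_sum_sq (s := Finset.univ) (f := fun i ↦ |p i - 1 / Fintype.card ι|)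
  simp only [sq_abs, Finset.card_univ, card_mul_sum_sub_one_div_card_sq hsum] at hcs
  linarith

lemma sum_abs_sub_le_two {p q : ι → ℝ} (hp : ∀ i, 0 ≤ p i) (hq : ∀ i, 0 ≤ q i)
    (hpsum : ∑ i, p i = 1) (hqsum : ∑ i, q i = 1) : ∑ i, |p i - q i| ≤ 2 :=
  calc ∑ i, |p i - q i|
    _ ≤ ∑ i, (p i + q i) := by
      gcongr with i
      exact abs_sub_le_iff.mpr ⟨by linarith [hq i], by linarith [hp i]⟩
    _ = 2 := by rw [Finset.sum_add_distrib, hpsum, hqsum, one_add_one_eq_two]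

section Measure

variable [MeasurableSpace ι] [MeasurableSingletonClass ι]

lemma exists_isProbabilityMeasure_real_singleton_eq {p : ι → ℝ} (hp : ∀ i, 0 ≤ p i)
    (hsum : ∑ i, p i = 1) :
    ∃ μ : Measure ι, IsProbabilityMeasure μ ∧ ∀ i, μ.real {i} = p i := by
  have hofReal : ∑ i, ENNReal.ofReal (p i) = 1 := by
    rw [← ENNReal.ofReal_sum_of_nonneg fun i _ ↦ hp i, hsum, ENNReal.ofReal_one]
  refine ⟨(PMF.ofFintype _ hofReal).toMeasure, inferInstance, fun i ↦ ?_⟩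
  simp [measureReal_def, hp i]

lemma pi_measureReal_setOf {κ : Type*} [Fintype κ] [DecidableEq κ] (μ : κ → Measure ι)
    [∀ a, SigmaFinite (μ a)] (A : (κ → ι) → Prop) [DecidablePred A] :
    (Measure.pi μ).real {s | A s} = ∑ s with A s, ∏ a, (μ a).real {s a} := by
  rw [← Finset.coe_filter_univ, ← sum_measureReal_singleton]
  simp [measureReal_def, ENNReal.toReal_prod]

variable {μ : Measure ι}

lemma integral_measureReal_singleton [IsFiniteMeasure μ] :
    ∫ i, μ.real {i} ∂μ = collisionProb fun i ↦ μ.real {i} := by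
  simp [integral_fintype .of_finite, collisionProb, sq]

lemma variance_measureReal_singleton_le [IsProbabilityMeasure μ] {c : ℝ}
    (hc : ∀ i, μ.real {i} ≤ c) :
    Var[fun i ↦ μ.real {i}; μ] ≤ c * collisionProb fun i ↦ μ.real {i} := by
  have h := variance_le_sub_mul_sub (μ := μ) (X := fun i ↦ μ.real {i}) (a := 0) (b := c)
    (.of_forall fun i ↦ ⟨measureReal_nonneg, hc i⟩) .of_discrete
  rw [integral_measureReal_singleton, sub_zero] at h
  exact h.trans <| mul_le_mul_of_nonneg_right (sub_le_self _ (collisionProb_nonneg _))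
    (collisionProb_nonneg _)

end Measure

lemma sq_div_add_sq_le_sum_prod {κ : Type*} [Fintype κ] [DecidableEq κ] {p : ι → ℝ}
    (hp : ∀ i, 0 ≤ p i) (hsum : ∑ i, p i = 1) {c t : ℝ} (hc : ∀ i, p i ≤ c) (ht : 0 < t) :
    t ^ 2 / (Fintype.card κ * (c * collisionProb p) + t ^ 2) ≤
      ∑ s : κ → ι with Fintype.card κ * collisionProb p - t ≤ ∑ a, p (s a), ∏ a, p (s a) := by
  let _ : MeasurableSpace ι := ⊤
  obtain ⟨μ, _, hμ⟩ := exists_isProbabilityMeasure_real_singleton_eq hp hsum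
  obtain rfl : (fun i ↦ μ.real {i}) = p := funext hμ
  rw [← pi_measureReal_setOf fun _ ↦ μ]
  have hcantelli := sq_div_variance_add_sq_le_measureReal (μ := Measure.pi fun _ : κ ↦ μ)
    (X := fun s ↦ ∑ a, μ.real {s a}) .of_discrete ht
  rw [integral_sum_comp_eval (X := fun i ↦ μ.real {i}) .of_finite, integral_measureReal_singleton,
    variance_sum_comp_eval (X := fun i ↦ μ.real {i}) .of_discrete] at hcantelli
  refine le_trans ?_ hcantelli
  have hv := variance_nonneg (fun i ↦ μ.real {i}) μ
  gcongr
  exact variance_measureReal_singleton_le hc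

end FiniteDistribution

section Constants

variable {M N x δ : ℝ}

lemma six_mul_one_add_le_pow_mul_sq (hM : 0 < M) (hx : 0 < x) (hx4 : x ≤ 4) (hxδ : x ≤ δ)
    (hMN : 32 * N ≤ M ^ 3 * x ^ 2) : 6 * N * (1 + δ) ≤ M ^ 3 * δ ^ 2 := by
  have hδ : 0 < δ := hx.trans_le hxδ
  have hratio : x ^ 2 * (1 + δ) ≤ 5 * δ ^ 2 :=
    calc x ^ 2 * (1 + δ)
      _ = x ^ 2 + x * x * δ := by ring
      _ ≤ δ ^ 2 + 4 * δ * δ := by gcongr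
      _ = 5 * δ ^ 2 := by ring
  calc 6 * N * (1 + δ)
    _ = 3 / 16 * (32 * N) * (1 + δ) := by ring
    _ ≤ 3 / 16 * (M ^ 3 * x ^ 2) * (1 + δ) := by gcongr
    _ = 3 / 16 * M ^ 3 * (x ^ 2 * (1 + δ)) := by ring
    _ ≤ 3 / 16 * M ^ 3 * (5 * δ ^ 2) := by gcongr
    _ ≤ M ^ 3 * δ ^ 2 := by linarith [show 0 ≤ M ^ 3 * δ ^ 2 by positivity]

lemma three_quarters_le_gap_sq_div (hM : 0 < M) (hN : 0 < N) (hx : 0 < x) (hx4 : x ≤ 4)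
    (hxδ : x ≤ δ) (hMN : 32 * N ≤ M ^ 3 * x ^ 2) :
    3 / 4 ≤ (M * (δ - x / 2) / N) ^ 2 /
      (M * (1 / (2 * M ^ 2) * ((1 + δ) / N)) + (M * (δ - x / 2) / N) ^ 2) := by
  have hδ : 0 < δ := hx.trans_le hxδ
  have hvar : 3 * (M * (1 / (2 * M ^ 2) * ((1 + δ) / N))) ≤ (M * (δ - x / 2) / N) ^ 2 :=
    calc 3 * (M * (1 / (2 * M ^ 2) * ((1 + δ) / N)))
      _ = 6 * N * (1 + δ) / (4 * M * N ^ 2) := by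
        field_simp
        ring
      _ ≤ M ^ 3 * δ ^ 2 / (4 * M * N ^ 2) := by
        gcongr ?_ / _
        exact six_mul_one_add_le_pow_mul_sq hM hx hx4 hxδ hMN
      _ = (M * (δ / 2) / N) ^ 2 := by
        field_simp
        ring
      _ ≤ (M * (δ - x / 2) / N) ^ 2 := by
        gcongr
        linarith
  rw [div_le_div_iff₀ (by norm_num) (by positivity)]
  linarith

end Constants

theorem uniformity_test_no_big_elements_general {ι : Type*} [Fintype ι] {ε : ℝ} (hε : 0 < ε)
    {M : ℕ} (hM3 : 32 * Fintype.card ι / ε ^ 4 ≤ (M : ℝ) ^ 3)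
    {p : ι → ℝ} (hp : ∀ i, 0 ≤ p i) (hsum : ∑ i, p i = 1)
    (hnonunif : ε ≤ ∑ i, |p i - 1 / Fintype.card ι|)
    (hnobig : ∀ i, p i ≤ 1 / (2 * (M : ℝ) ^ 2)) :
    3 / 4 ≤ ∑ s : Fin M → ι with
      (1 + ε ^ 2 / 2) * M / Fintype.card ι ≤ ∑ a, p (s a), ∏ a, p (s a) := by
  have : Nonempty ι := not_isEmpty_iff.mp fun _ ↦ by simp at hsum
  have hN : (0 : ℝ) < Fintype.card ι := by positivity
  have hMN : 32 * Fintype.card ι ≤ (M : ℝ) ^ 3 * (ε ^ 2) ^ 2 := by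
    rwa [← pow_mul, ← div_le_iff₀ (by positivity)]
  have hM : (0 : ℝ) < M :=
    (Odd.pow_pos_iff (by decide : Odd 3)).mp (lt_of_lt_of_le (by positivity) hM3)
  have hε4 : ε ^ 2 ≤ 4 := by
    have hε2 : ε ≤ 2 := hnonunif.trans <|
      sum_abs_sub_le_two hp (fun _ ↦ by positivity) hsum (by simp)
    nlinarith
  obtain ⟨δ, hδ⟩ : ∃ δ, collisionProb p = (1 + δ) / Fintype.card ι :=
    ⟨Fintype.card ι * collisionProb p - 1, by field_simp; ring⟩
  have hεδ : ε ^ 2 ≤ δ := by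
    have hcs := one_add_sq_sum_abs_le_card_mul_collisionProb hsum
    rw [hδ, mul_div_cancel₀ _ hN.ne'] at hcs
    linarith [pow_le_pow_left₀ hε.le hnonunif 2]
  have hgap : 0 < M * (δ - ε ^ 2 / 2) / Fintype.card ι := by
    have : 0 < δ - ε ^ 2 / 2 := by linarith [pow_pos hε 2]
    positivity
  have hthreshold : (1 + ε ^ 2 / 2) * M / Fintype.card ι =
      M * ((1 + δ) / Fintype.card ι) - M * (δ - ε ^ 2 / 2) / Fintype.card ι := by ring
  have htail := sq_div_add_sq_le_sum_prod (κ := Fin M) hp hsum hnobig hgap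
  rw [Fintype.card_fin, hδ, ← hthreshold] at htail
  exact (three_quarters_le_gap_sq_div hM hN (pow_pos hε 2) hε4 hεδ hMN).trans htail

/-- No-big-elements case: if `p` is ε-nonuniform and `p i ≤ 1/(2M²)` for all `i`,
with `M³ ≥ 32 N / ε⁴`, then `p_S ≥ (1 + ε²/2) M / N` with probability at least `3/4`
over `M` independent samples from `p`. -/
theorem uniformity_test_no_big_elements
    (ε : ℝ) (hε : 0 < ε) (hε2 : ε ^ 2 ≤ 1 / 3)
    (N M : ℕ) (hN : 0 < N) (hM : 0 < M)
    (hM3 : (M : ℝ) ^ 3 ≥ 32 * (N : ℝ) / ε ^ 4)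
    (p : Fin N → ℝ) (hp : ∀ i, 0 ≤ p i) (hsum : ∑ i, p i = 1)
    (hnonunif : ∑ i, |p i - 1 / (N : ℝ)| ≥ ε)
    (hnobig : ∀ i, p i ≤ 1 / (2 * (M : ℝ) ^ 2)) :
    (∑ s ∈ Finset.univ.filter (fun s : Fin M → Fin N =>
        (1 + ε ^ 2 / 2) * (M : ℝ) / (N : ℝ) ≤ ∑ a, p (s a)),
      ∏ a, p (s a)) ≥ 3 / 4 := by
  simpa using uniformity_test_no_big_elements_general hε (by simpa using hM3) hp hsum
    (by simpa using hnonunif) hnobig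
end

section
/- Let p be a probability distribution on Fin N, let M be a positive integer, let Big = {i : p i > 1/(2M²)} and w = ∑_{i ∈ Big} p i, and suppose w < 1. Define p' : Fin N → ℝ by p' i = p i/(1−w) for i ∉ Big and p' i = 0 for i ∈ Big. Then p' is a probability distribution on Fin N, ‖p − p'‖₁ ≤ w + w/(1−w), and if ‖p − u‖₁ ≥ ε (u the uniform distribution), then ‖p' − u‖₁ ≥ ε − w − w/(1−w). -/
open scoped Classical

/-!
Deleting a set `s` of mass `w < 1` and renormalizing moves mass `w` off `s` and spreads the same
amount over the complement, so it changes the distribution by exactly `2 * w` in L1-distance.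
This is at most `w + w / (1 - w)`, and the triangle inequality transfers it to the distance from
any third vector.
-/

theorem sum_compl_eq_sum_sub_sum {ι G : Type*} [Fintype ι] [DecidableEq ι] [AddCommGroup G]
    (s : Finset ι) (f : ι → G) : ∑ i ∈ sᶜ, f i = ∑ i, f i - ∑ i ∈ s, f i := by
  rw [Finset.compl_eq_univ_sdiff, Finset.sum_sdiff_eq_sub s.subset_univ]

section OrderedAddCommGroup

variable {ι G : Type*} [AddCommGroup G] [LinearOrder G] [IsOrderedAddMonoid G]

theorem sum_abs_sub_le (s : Finset ι) (f g h : ι → G) :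
    ∑ i ∈ s, |f i - h i| ≤ ∑ i ∈ s, |f i - g i| + ∑ i ∈ s, |g i - h i| := by
  rw [← Finset.sum_add_distrib]
  exact Finset.sum_le_sum fun i _ => abs_sub_le (f i) (g i) (h i)

end OrderedAddCommGroup

/-- The conditional distribution of `p` given the complement of `s`, as a function on all of `ι`,
for `p` of total mass `1`. It vanishes identically when `s` has mass `1`, since division by zero
gives zero. -/
def condCompl {ι K : Type*} [DecidableEq ι] [Field K] (p : ι → K) (s : Finset ι) : ι → K :=
  fun i => if i ∈ s then 0 else p i / (1 - ∑ j ∈ s, p j)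

section Field

variable {ι K : Type*} [DecidableEq ι] [Field K] {p : ι → K} {s : Finset ι} {i : ι}

theorem condCompl_of_mem (hi : i ∈ s) : condCompl p s i = 0 :=
  if_pos hi

theorem condCompl_of_notMem (hi : i ∉ s) : condCompl p s i = p i / (1 - ∑ j ∈ s, p j) :=
  if_neg hi

theorem sub_condCompl_of_notMem (hs : ∑ j ∈ s, p j ≠ 1) (hi : i ∉ s) :
    p i - condCompl p s i = -(p i * (∑ j ∈ s, p j) / (1 - ∑ j ∈ s, p j)) := by
  have h : 1 - ∑ j ∈ s, p j ≠ 0 := sub_ne_zero.2 hs.symm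
  rw [condCompl_of_notMem hi]
  field_simp
  ring

theorem sum_condCompl [Fintype ι] (hp : ∑ i, p i = 1) (hs : ∑ i ∈ s, p i ≠ 1) :
    ∑ i, condCompl p s i = 1 := by
  calc ∑ i, condCompl p s i
      = ∑ i ∈ s, condCompl p s i + ∑ i ∈ sᶜ, condCompl p s i :=
        (Finset.sum_add_sum_compl s _).symm
    _ = 0 + ∑ i ∈ sᶜ, p i / (1 - ∑ j ∈ s, p j) := by
        congr 1
        · exact Finset.sum_eq_zero fun i hi => condCompl_of_mem hi
        · exact Finset.sum_congr rfl fun i hi => condCompl_of_notMem (Finset.mem_compl.1 hi)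
    _ = 1 := by
        rw [zero_add, ← Finset.sum_div, sum_compl_eq_sum_sub_sum, hp,
          div_self (sub_ne_zero.2 hs.symm)]

end Field

section LinearOrderedField

variable {ι K : Type*} [Field K] [LinearOrder K] [IsStrictOrderedRing K]

theorem two_mul_le_add_div_one_sub {w : K} (hw : w < 1) : 2 * w ≤ w + w / (1 - w) := by
  have h : w ≤ w / (1 - w) := by
    rw [le_div_iff₀ (sub_pos.2 hw)]
    linarith [mul_self_nonneg w]
  linarith

variable [DecidableEq ι] [Fintype ι] {p : ι → K} {s : Finset ι}

theorem condCompl_mem_stdSimplex (hp : p ∈ stdSimplex K ι) (hs : ∑ i ∈ s, p i < 1) :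
    condCompl p s ∈ stdSimplex K ι := by
  refine ⟨fun i => ?_, sum_condCompl hp.2 hs.ne⟩
  by_cases hi : i ∈ s
  · rw [condCompl_of_mem hi]
  · rw [condCompl_of_notMem hi]
    exact div_nonneg (hp.1 i) (sub_pos.2 hs).le

theorem sum_abs_sub_condCompl (hp : p ∈ stdSimplex K ι) (hs : ∑ i ∈ s, p i < 1) :
    ∑ i, |p i - condCompl p s i| = 2 * ∑ i ∈ s, p i := by
  set w := ∑ i ∈ s, p i
  have hw0 : 0 ≤ w := Finset.sum_nonneg fun i _ => hp.1 i
  have hw1 : 0 < 1 - w := sub_pos.2 hs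
  have on_s : ∑ i ∈ s, |p i - condCompl p s i| = w :=
    Finset.sum_congr rfl fun i hi => by
      rw [condCompl_of_mem hi, sub_zero, abs_of_nonneg (hp.1 i)]
  have off_s : ∑ i ∈ sᶜ, |p i - condCompl p s i| = w :=
    calc ∑ i ∈ sᶜ, |p i - condCompl p s i|
        = ∑ i ∈ sᶜ, p i * w / (1 - w) :=
          Finset.sum_congr rfl fun i hi => by
            rw [sub_condCompl_of_notMem hs.ne (Finset.mem_compl.1 hi), abs_neg,
              abs_of_nonneg (div_nonneg (mul_nonneg (hp.1 i) hw0) hw1.le)]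
      _ = (1 - w) * w / (1 - w) := by
          rw [← Finset.sum_div, ← Finset.sum_mul, sum_compl_eq_sum_sub_sum, hp.2]
      _ = w := mul_div_cancel_left₀ w hw1.ne'
  rw [← Finset.sum_add_sum_compl s, on_s, off_s, two_mul]

theorem remove_big_elements_general (hp : p ∈ stdSimplex K ι) (hs : ∑ i ∈ s, p i < 1) :
    condCompl p s ∈ stdSimplex K ι ∧
    ∑ i, |p i - condCompl p s i| = 2 * ∑ i ∈ s, p i ∧
    ∀ q : ι → K,
      ∑ i, |p i - q i| ≤ 2 * ∑ i ∈ s, p i + ∑ i, |condCompl p s i - q i| := by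
  have hdist := sum_abs_sub_condCompl hp hs
  exact ⟨condCompl_mem_stdSimplex hp hs, hdist,
    fun q => hdist ▸ sum_abs_sub_le Finset.univ p (condCompl p s) q⟩

end LinearOrderedField

/-- Removing big elements: setting the probability of big elements to zero and
renormalizing yields a probability distribution `p'` that is close to `p` in
L1-distance and remains almost as nonuniform as `p`. -/
theorem remove_big_elements
    (N M : ℕ) (hN : 0 < N) (hM : 0 < M)
    (p : Fin N → ℝ) (hp : ∀ i, 0 ≤ p i) (hsum : ∑ i, p i = 1)
    (w : ℝ)
    (hw : w = ∑ i ∈ Finset.univ.filter (fun i => p i > 1 / (2 * (M : ℝ) ^ 2)), p i)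
    (hw1 : w < 1)
    (p' : Fin N → ℝ)
    (hp' : ∀ i, p' i = if p i > 1 / (2 * (M : ℝ) ^ 2) then 0 else p i / (1 - w))
    (ε : ℝ) :
    (∀ i, 0 ≤ p' i) ∧ (∑ i, p' i = 1) ∧
    (∑ i, |p i - p' i| ≤ w + w / (1 - w)) ∧
    ((∑ i, |p i - 1 / (N : ℝ)| ≥ ε) →
      ∑ i, |p' i - 1 / (N : ℝ)| ≥ ε - w - w / (1 - w)) := by
  subst hw
  obtain rfl : p' = condCompl p {i | p i > 1 / (2 * (M : ℝ) ^ 2)} :=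
    funext fun i => by simp only [hp', condCompl, Finset.mem_filter_univ]
  obtain ⟨⟨hnonneg, hone⟩, hdist, hfar⟩ := remove_big_elements_general ⟨hp, hsum⟩ hw1
  have hbound := two_mul_le_add_div_one_sub hw1
  exact ⟨hnonneg, hone, hdist.trans_le hbound, fun hε => by linarith [hfar fun _ => 1 / (N : ℝ)]⟩
end

section
/- Let ε > 0 with ε² ≤ 1/3 and set α = 2⁸/ε⁴. There exists N₀ (depending only on ε) such that the following holds for all N ≥ N₀: for every positive integer M with M³ = 32·N/ε⁴ and every ε-nonuniform probability distribution p on Fin N whose big-element weight satisfies w_big ≤ α/M, one has Prob[ p_S ≥ (1 + ε²/2)·M/N ] ≥ (1/2)·exp(−α), where the probability is over M independent samples from p. -/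
open scoped Classical

/-!
Let `f i = p i` if `p i ≤ 1 / (2 M²)` and `f i = 0` otherwise. Since `f ≤ p`, it suffices that
`∑ a, f (s a)` is large under the original distribution `p`; there is no need to condition on
seeing no big element. The mean of this sum is `M ∑ f²`. Only the weight `w` of the big elements,
at most `α / M`, is discarded, so Cauchy–Schwarz gives `N ∑ f² ≥ 1 + (ε - w)² - 2 w`, which
exceeds `1 + ε² / 2` by almost `ε² / 2` when `M` is large. The truncation gives
`E[f²] ≤ E[f] / (2 M²)`, and with `M³ ≥ 32 N / ε⁴` the variance is at most half the squared gap
between the mean and the threshold, so Chebyshev's inequality gives probability at least `1 / 2`.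
-/

open MeasureTheory ProbabilityTheory

universe u

section SmallPart

variable {ι : Type*} {p : ι → ℝ}

/-- The weights `p` with every big element, i.e. every `i` with `p i > τ`, reset to weight `0`.
The total is not renormalized. -/
noncomputable def smallPart (p : ι → ℝ) (τ : ℝ) (i : ι) : ℝ := if p i > τ then 0 else p i

theorem smallPart_le (hp0 : ∀ i, 0 ≤ p i) (τ : ℝ) (i : ι) : smallPart p τ i ≤ p i := by
  unfold smallPart
  split_ifs
  exacts [hp0 i, le_rfl]

theorem mul_smallPart (p : ι → ℝ) (τ : ℝ) (i : ι) :
    p i * smallPart p τ i = smallPart p τ i ^ 2 := by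
  unfold smallPart
  split_ifs <;> ring

theorem mul_smallPart_sq_le (p : ι → ℝ) (τ : ℝ) (i : ι) :
    p i * smallPart p τ i ^ 2 ≤ τ * smallPart p τ i ^ 2 := by
  unfold smallPart
  split_ifs with h
  · simp
  · gcongr
    exact not_lt.1 h

theorem sum_sub_smallPart [Fintype ι] (p : ι → ℝ) (τ : ℝ) :
    ∑ i, (p i - smallPart p τ i) = ∑ i with p i > τ, p i := by
  rw [Finset.sum_filter]
  refine Finset.sum_congr rfl fun i _ => ?_
  unfold smallPart
  split_ifs <;> ring

theorem sum_prod_smallPart_le [Fintype ι] {κ : Type*} [Fintype κ] [DecidableEq κ]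
    (hp0 : ∀ i, 0 ≤ p i) (τ T : ℝ) :
    ∑ s : κ → ι with T ≤ ∑ a, smallPart p τ (s a), ∏ a, p (s a) ≤
      ∑ s : κ → ι with T ≤ ∑ a, p (s a), ∏ a, p (s a) := by
  refine Finset.sum_le_sum_of_subset_of_nonneg (Finset.monotone_filter_right _ fun s _ hs => ?_)
    fun s _ _ => Finset.prod_nonneg fun a _ => hp0 (s a)
  exact hs.trans (Finset.sum_le_sum fun a _ => smallPart_le hp0 τ (s a))

end SmallPart

variable {ι κ : Type*} [Fintype ι] [Fintype κ]

section Chebyshev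

theorem measureReal_pi_sum_lt_le_variance_div_sq {Ω : Type*} [MeasurableSpace Ω] {μ : Measure Ω}
    [IsProbabilityMeasure μ] {f : Ω → ℝ} (hf : MemLp f 2 μ) {T : ℝ}
    (hT : T < Fintype.card κ * ∫ x, f x ∂μ) :
    (Measure.pi fun _ : κ => μ).real {s | ∑ a, f (s a) < T} ≤
      Fintype.card κ * Var[f; μ] / (Fintype.card κ * (∫ x, f x ∂μ) - T) ^ 2 := by
  set P := Measure.pi fun _ : κ => μ
  have hcoord (a : κ) : MemLp (fun s : κ → Ω => f (s a)) 2 P :=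
    hf.comp_measurePreserving (measurePreserving_eval (fun _ => μ) a)
  have hmean : ∫ s, ∑ a, f (s a) ∂P = Fintype.card κ * ∫ x, f x ∂μ := by
    rw [integral_finsetSum _ fun a _ => (hcoord a).integrable one_le_two]
    simp [P, integral_comp_eval (μ := fun _ : κ => μ) hf.aestronglyMeasurable]
  have hvar : Var[fun s => ∑ a, f (s a); P] = Fintype.card κ * Var[f; μ] := by
    simpa [Finset.sum_fn] using variance_sum_pi (μ := fun _ : κ => μ) (fun _ => hf)
  have hcheb := meas_ge_le_variance_div_sq (memLp_finsetSum Finset.univ fun a _ => hcoord a)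
    (sub_pos.2 hT)
  rw [hmean, hvar] at hcheb
  have hbound : 0 ≤ Fintype.card κ * Var[f; μ] / (Fintype.card κ * (∫ x, f x ∂μ) - T) ^ 2 :=
    div_nonneg (mul_nonneg (by positivity) (variance_nonneg f μ)) (sq_nonneg _)
  refine (measureReal_mono fun s hs => ?_).trans (ENNReal.toReal_le_of_le_ofReal hbound hcheb)
  rw [Set.mem_ofPred_eq] at hs ⊢
  rw [abs_sub_comm]
  exact (sub_le_sub_left hs.le _).trans (le_abs_self _)

theorem measureReal_pi_eq_sum_prod [DecidableEq κ] [MeasurableSpace ι] [MeasurableSingletonClass ι]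
    (μ : Measure ι) [SigmaFinite μ] (E : (κ → ι) → Prop) [DecidablePred E] :
    (Measure.pi fun _ : κ => μ).real {s | E s} = ∑ s with E s, ∏ a, μ.real {s a} := by
  have hE : {s | E s} = ((Finset.univ.filter E : Finset (κ → ι)) : Set (κ → ι)) := by simp
  rw [hE, ← sum_measureReal_singleton]
  simp only [measureReal_def, Measure.pi_singleton, ENNReal.toReal_prod]

theorem exists_isProbabilityMeasure_real_singleton [MeasurableSpace ι]
    [MeasurableSingletonClass ι] {p : ι → ℝ} (hp0 : ∀ i, 0 ≤ p i) (hp1 : ∑ i, p i = 1) :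
    ∃ μ : Measure ι, IsProbabilityMeasure μ ∧ ∀ i, μ.real {i} = p i := by
  have hsum : ∑ i, ENNReal.ofReal (p i) = 1 := by
    rw [← ENNReal.ofReal_sum_of_nonneg fun i _ => hp0 i, hp1, ENNReal.ofReal_one]
  refine ⟨(PMF.ofFintype _ hsum).toMeasure, inferInstance, fun i => ?_⟩
  rw [measureReal_def, PMF.toMeasure_apply_singleton _ _ (measurableSet_singleton i),
    PMF.ofFintype_apply, ENNReal.toReal_ofReal (hp0 i)]

theorem one_sub_le_sum_prod_of_lt_mean [DecidableEq κ] {p : ι → ℝ} (hp0 : ∀ i, 0 ≤ p i)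
    (hp1 : ∑ i, p i = 1) (f : ι → ℝ) {T : ℝ} (hT : T < Fintype.card κ * ∑ i, p i * f i) :
    1 - Fintype.card κ * (∑ i, p i * f i ^ 2) / (Fintype.card κ * (∑ i, p i * f i) - T) ^ 2 ≤
      ∑ s : κ → ι with T ≤ ∑ a, f (s a), ∏ a, p (s a) := by
  let _ : MeasurableSpace ι := ⊤
  obtain ⟨μ, _, hμ⟩ := exists_isProbabilityMeasure_real_singleton hp0 hp1
  have hint (g : ι → ℝ) : ∫ i, g i ∂μ = ∑ i, p i * g i := by
    simp [integral_fintype (Integrable.of_finite (f := g) (μ := μ)), hμ]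
  have hvar : Var[f; μ] ≤ ∑ i, p i * f i ^ 2 := by
    simpa [hint] using variance_le_expectation_sq (μ := μ) (X := f) .of_discrete
  have hcheb := measureReal_pi_sum_lt_le_variance_div_sq (μ := μ) (f := f) (κ := κ) .of_discrete
    (by rwa [hint])
  have hcompl : {s : κ → ι | T ≤ ∑ a, f (s a)} = {s | ∑ a, f (s a) < T}ᶜ := by
    ext s; simp
  have hprob := measureReal_pi_eq_sum_prod (κ := κ) μ fun s => T ≤ ∑ a, f (s a)
  simp only [hμ] at hprob
  rw [← hprob, hcompl, probReal_compl_eq_one_sub .of_discrete]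
  rw [hint] at hcheb
  exact sub_le_sub_left (hcheb.trans (by gcongr)) _

end Chebyshev

section UniformDistance

theorem sum_abs_sub_inv_card_le_two {p : ι → ℝ} (hp0 : ∀ i, 0 ≤ p i) (hp1 : ∑ i, p i = 1) :
    ∑ i, |p i - 1 / (Fintype.card ι : ℝ)| ≤ 2 := by
  have : Nonempty ι :=
    Finset.univ_nonempty_iff.1 (Finset.nonempty_of_sum_ne_zero (hp1.trans_ne one_ne_zero))
  have hunif : ∑ _i : ι, 1 / (Fintype.card ι : ℝ) = 1 := by simp
  calc ∑ i, |p i - 1 / (Fintype.card ι : ℝ)|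
      ≤ ∑ i, (p i + 1 / (Fintype.card ι : ℝ)) := by
        gcongr with i
        have hu : 0 ≤ 1 / (Fintype.card ι : ℝ) := by positivity
        exact abs_le.2 ⟨by linarith [hp0 i], by linarith⟩
    _ = 2 := by rw [Finset.sum_add_distrib, hp1, hunif, one_add_one_eq_two]

theorem sq_sum_abs_sub_inv_card_le [Nonempty ι] (q : ι → ℝ) :
    (∑ i, |q i - 1 / (Fintype.card ι : ℝ)|) ^ 2 ≤
      Fintype.card ι * (∑ i, q i ^ 2) - 2 * (∑ i, q i) + 1 := by
  calc (∑ i, |q i - 1 / (Fintype.card ι : ℝ)|) ^ 2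
      ≤ Fintype.card ι * ∑ i, (q i - 1 / (Fintype.card ι : ℝ)) ^ 2 := by
        simpa using sq_sum_le_card_mul_sum_sq (s := Finset.univ)
          (f := fun i => |q i - 1 / (Fintype.card ι : ℝ)|)
    _ = Fintype.card ι * (∑ i, q i ^ 2) - 2 * (∑ i, q i) + 1 := by
        simp only [sub_sq, Finset.sum_add_distrib, Finset.sum_sub_distrib, ← Finset.sum_mul,
          ← Finset.mul_sum, Finset.sum_const, Finset.card_univ, nsmul_eq_mul]
        field_simp

theorem one_add_sq_sub_le_card_mul_sum_sq [Nonempty ι] {p q : ι → ℝ} {ε w : ℝ}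
    (hqp : ∀ i, q i ≤ p i) (hp1 : ∑ i, p i = 1) (hw : ∑ i, (p i - q i) ≤ w) (hwε : w ≤ ε)
    (hε : ε ≤ ∑ i, |p i - 1 / (Fintype.card ι : ℝ)|) :
    1 + (ε - w) ^ 2 - 2 * w ≤ Fintype.card ι * ∑ i, q i ^ 2 := by
  have hdist : ε - w ≤ ∑ i, |q i - 1 / (Fintype.card ι : ℝ)| := by
    have htri : ∑ i, |p i - 1 / (Fintype.card ι : ℝ)| ≤
        ∑ i, (p i - q i) + ∑ i, |q i - 1 / (Fintype.card ι : ℝ)| := by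
      rw [← Finset.sum_add_distrib]
      gcongr with i
      simpa [abs_of_nonneg (sub_nonneg.2 (hqp i))] using
        abs_sub_le (p i) (q i) (1 / (Fintype.card ι : ℝ))
    linarith
  have hsq := (pow_le_pow_left₀ (sub_nonneg.2 hwε) hdist 2).trans (sq_sum_abs_sub_inv_card_le q)
  rw [Finset.sum_sub_distrib, hp1] at hw
  linarith

end UniformDistance

-- Equality holds at `ε = 2`, `x = 9 / 2`; this is the source of the factor `7 / 8`, and hence of
-- the bound `ε² / 48` on the weight of the big elements.
theorem pow_four_mul_le_sq_gap {ε x : ℝ} (hε4 : ε ^ 2 ≤ 4) (hx : 1 + 7 / 8 * ε ^ 2 ≤ x) :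
    ε ^ 4 * x ≤ 32 * (x - (1 + ε ^ 2 / 2)) ^ 2 := by
  obtain ⟨y, rfl⟩ : ∃ y, x = y + (1 + ε ^ 2 / 2) := ⟨x - (1 + ε ^ 2 / 2), by ring⟩
  have hy : ε ^ 2 ≤ 8 / 3 * y := by linarith
  have hsq : (ε ^ 2) ^ 2 ≤ (8 / 3 * y) ^ 2 := by gcongr
  have hy0 : 0 ≤ y := by linarith [sq_nonneg ε]
  calc ε ^ 4 * (y + (1 + ε ^ 2 / 2))
      = (ε ^ 2) ^ 2 * (1 + ε ^ 2 / 2) + ε ^ 2 * ε ^ 2 * y := by ring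
    _ ≤ (8 / 3 * y) ^ 2 * (1 + 4 / 2) + 4 * (8 / 3 * y) * y := by gcongr
    _ = 32 * (y + (1 + ε ^ 2 / 2) - (1 + ε ^ 2 / 2)) ^ 2 := by ring

theorem mul_threshold_mul_le_half_sq_gap {ε M N c m : ℝ} (hε0 : 0 < ε) (hM : 0 < M) (hN : 0 < N)
    (hMN : 32 * N / ε ^ 4 ≤ M ^ 3) (hm : ε ^ 4 * (N * m) ≤ 32 * (N * m - c) ^ 2) :
    M * (1 / (2 * M ^ 2) * m) ≤ 1 / 2 * (M * m - c * M / N) ^ 2 := by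
  have hNm : N * (N * m) ≤ M ^ 3 * (N * m - c) ^ 2 := by
    calc N * (N * m) ≤ N * (32 * (N * m - c) ^ 2 / ε ^ 4) := by
          gcongr
          rwa [le_div_iff₀' (by positivity)]
      _ = 32 * N / ε ^ 4 * (N * m - c) ^ 2 := by ring
      _ ≤ M ^ 3 * (N * m - c) ^ 2 := by gcongr
  calc M * (1 / (2 * M ^ 2) * m) = N * (N * m) / (2 * M * N ^ 2) := by field_simp
    _ ≤ M ^ 3 * (N * m - c) ^ 2 / (2 * M * N ^ 2) := by gcongr
    _ = 1 / 2 * (M * m - c * M / N) ^ 2 := by field_simp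

theorem one_add_le_card_mul_sum_smallPart_sq [Nonempty ι] {p : ι → ℝ} {ε τ : ℝ} (hε0 : 0 ≤ ε)
    (hε2 : ε ≤ 2) (hp0 : ∀ i, 0 ≤ p i) (hp1 : ∑ i, p i = 1)
    (hε : ε ≤ ∑ i, |p i - 1 / (Fintype.card ι : ℝ)|)
    (hw : ∑ i with p i > τ, p i ≤ ε ^ 2 / 48) :
    1 + 7 / 8 * ε ^ 2 ≤ Fintype.card ι * ∑ i, smallPart p τ i ^ 2 := by
  have hwε : ε ^ 2 / 48 ≤ ε := by nlinarith
  calc 1 + 7 / 8 * ε ^ 2 = 1 + ε ^ 2 - (2 * 2 + 2) * (ε ^ 2 / 48) := by ring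
    _ ≤ 1 + ε ^ 2 - (2 * ε + 2) * (ε ^ 2 / 48) := by gcongr
    _ ≤ 1 + (ε - ε ^ 2 / 48) ^ 2 - 2 * (ε ^ 2 / 48) := by linarith [sq_nonneg (ε ^ 2 / 48)]
    _ ≤ Fintype.card ι * ∑ i, smallPart p τ i ^ 2 :=
        one_add_sq_sub_le_card_mul_sum_sq (smallPart_le hp0 τ) hp1
          ((sum_sub_smallPart p τ).trans_le hw) hwε hε

theorem half_le_sum_prod_of_sum_big_le {ε : ℝ} (hε0 : 0 < ε) {M : ℕ}
    (hMN : 32 * (Fintype.card ι : ℝ) / ε ^ 4 ≤ (M : ℝ) ^ 3) {p : ι → ℝ}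
    (hp0 : ∀ i, 0 ≤ p i) (hp1 : ∑ i, p i = 1)
    (hε : ε ≤ ∑ i, |p i - 1 / (Fintype.card ι : ℝ)|)
    (hw : ∑ i with p i > 1 / (2 * (M : ℝ) ^ 2), p i ≤ ε ^ 2 / 48) :
    1 / 2 ≤ ∑ s : Fin M → ι with
      (1 + ε ^ 2 / 2) * M / (Fintype.card ι : ℝ) ≤ ∑ a, p (s a), ∏ a, p (s a) := by
  have : Nonempty ι :=
    Finset.univ_nonempty_iff.1 (Finset.nonempty_of_sum_ne_zero (hp1.trans_ne one_ne_zero))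
  have hε2 : ε ≤ 2 := hε.trans (sum_abs_sub_inv_card_le_two hp0 hp1)
  set τ : ℝ := 1 / (2 * (M : ℝ) ^ 2)
  set N : ℝ := (Fintype.card ι : ℝ)
  have hN0 : 0 < N := by positivity
  have hM0 : 0 < (M : ℝ) :=
    (by decide : Odd 3).pow_pos_iff.1 (lt_of_lt_of_le (by positivity) hMN)
  set f := smallPart p τ
  set m := ∑ i, f i ^ 2
  have hmean : ∑ i, p i * f i = m := Finset.sum_congr rfl fun i _ => mul_smallPart p τ i
  have hsecond : ∑ i, p i * f i ^ 2 ≤ τ * m := by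
    rw [Finset.mul_sum]
    exact Finset.sum_le_sum fun i _ => mul_smallPart_sq_le p τ i
  have hlow : 1 + 7 / 8 * ε ^ 2 ≤ N * m :=
    one_add_le_card_mul_sum_smallPart_sq hε0.le hε2 hp0 hp1 hε hw
  have hT : (1 + ε ^ 2 / 2) * M / N < Fintype.card (Fin M) * ∑ i, p i * f i := by
    rw [hmean, Fintype.card_fin, div_lt_iff₀ hN0, mul_comm _ (M : ℝ), mul_assoc]
    gcongr
    nlinarith [pow_pos hε0 2]
  have hvar : M * ∑ i, p i * f i ^ 2 ≤ 1 / 2 * (M * m - (1 + ε ^ 2 / 2) * M / N) ^ 2 :=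
    (mul_le_mul_of_nonneg_left hsecond M.cast_nonneg).trans <|
      mul_threshold_mul_le_half_sq_gap hε0 hM0 hN0 hMN
        (pow_four_mul_le_sq_gap (by nlinarith) hlow)
  have hcheb := one_sub_le_sum_prod_of_lt_mean hp0 hp1 f hT
  rw [hmean, Fintype.card_fin] at hcheb hT
  have hfail := div_le_of_le_mul₀ (sq_nonneg _) one_half_pos.le hvar
  refine le_trans ?_ (hcheb.trans (sum_prod_smallPart_le hp0 τ _))
  linarith

theorem uniformity_test_few_big_elements_general (ε : ℝ) (hε0 : 0 < ε) (α : ℝ) :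
    ∃ N₀ : ℕ, ∀ (ι : Type u) [Fintype ι], N₀ ≤ Fintype.card ι → ∀ M : ℕ,
      32 * (Fintype.card ι : ℝ) / ε ^ 4 ≤ (M : ℝ) ^ 3 →
      ∀ p : ι → ℝ, (∀ i, 0 ≤ p i) → ∑ i, p i = 1 →
      ε ≤ ∑ i, |p i - 1 / (Fintype.card ι : ℝ)| →
      ∑ i with p i > 1 / (2 * (M : ℝ) ^ 2), p i ≤ α / M →
      1 / 2 ≤ ∑ s : Fin M → ι with
        (1 + ε ^ 2 / 2) * M / (Fintype.card ι : ℝ) ≤ ∑ a, p (s a), ∏ a, p (s a) := by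
  obtain ⟨K, hK⟩ := exists_nat_gt (48 * α / ε ^ 2)
  refine ⟨K ^ 3 + 1, fun ι _ hN M hMN p hp0 hp1 hε hw => ?_⟩
  have hε2 : ε ≤ 2 := hε.trans (sum_abs_sub_inv_card_le_two hp0 hp1)
  have hKM : K < M := by
    have hε4 : ε ^ 4 ≤ 32 := (pow_le_pow_left₀ hε0.le hε2 4).trans (by norm_num)
    have hNM : (Fintype.card ι : ℝ) ≤ (M : ℝ) ^ 3 := by
      refine le_trans ?_ hMN
      rw [le_div_iff₀ (by positivity), mul_comm]
      gcongr
    exact lt_of_pow_lt_pow_left₀ 3 M.zero_le (hN.trans (mod_cast hNM))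
  have hM : 0 < M := K.zero_le.trans_lt hKM
  refine half_le_sum_prod_of_sum_big_le hε0 hMN hp0 hp1 hε (hw.trans ?_)
  have hαM : 48 * α / ε ^ 2 ≤ M := hK.le.trans (mod_cast hKM.le)
  rw [div_le_iff₀ (by positivity)] at hαM ⊢
  linarith

/-- A-few-big-elements case: if `p` is ε-nonuniform and its big-element weight
satisfies `w_big ≤ α/M` with `α = 2⁸/ε⁴` and `M³ = 32 N / ε⁴`, then for large
enough `N`, `p_S ≥ (1 + ε²/2) M / N` with probability at least `(1/2)·exp(−α)`. -/
theorem uniformity_test_few_big_elements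
    (ε : ℝ) (hε : 0 < ε) (hε2 : ε ^ 2 ≤ 1 / 3) :
    ∃ N₀ : ℕ, ∀ N : ℕ, N₀ ≤ N → ∀ M : ℕ, 0 < M →
      (M : ℝ) ^ 3 = 32 * (N : ℝ) / ε ^ 4 →
      ∀ p : Fin N → ℝ, (∀ i, 0 ≤ p i) → (∑ i, p i = 1) →
      (∑ i, |p i - 1 / (N : ℝ)| ≥ ε) →
      (∑ i ∈ Finset.univ.filter (fun i => p i > 1 / (2 * (M : ℝ) ^ 2)), p i)
        ≤ (2 ^ 8 / ε ^ 4) / (M : ℝ) →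
      (∑ s ∈ Finset.univ.filter (fun s : Fin M → Fin N =>
          (1 + ε ^ 2 / 2) * (M : ℝ) / (N : ℝ) ≤ ∑ a, p (s a)),
        ∏ a, p (s a)) ≥ (1 / 2) * Real.exp (-(2 ^ 8 / ε ^ 4)) := by
  obtain ⟨N₀, hN₀⟩ := uniformity_test_few_big_elements_general ε hε (2 ^ 8 / ε ^ 4)
  refine ⟨N₀, fun N hN M _ hMN p hp0 hp1 hpε hw => ?_⟩
  have hhalf := hN₀ (Fin N) (by simpa using hN) M (by simpa using hMN.ge) p hp0 hp1
    (by simpa using hpε) hw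
  rw [Fintype.card_fin] at hhalf
  have hexp : Real.exp (-(2 ^ 8 / ε ^ 4)) ≤ 1 :=
    Real.exp_le_one_iff.2 (neg_nonpos.2 (by positivity))
  exact (mul_le_of_le_one_right one_half_pos.le hexp).trans hhalf
end

section
/- Let 0 < ε ≤ 2, set α = 2⁸/ε⁴, and let N, M be positive integers with M³ = 32·N/ε⁴. Let p be an ε-nonuniform probability distribution on Fin N whose big-element weight satisfies w_big > α/M. Then, for M independent samples from p, Prob[ p_S ≥ 2M/N ] ≥ 1/2. -/
open scoped Classical

open MeasureTheory ProbabilityTheory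

/-! Call `i` big if `p i > τ`, where `τ = 1 / (2M²)`. Since `2M/N = (α/2) τ`, it is enough that at
least `α/2` of the samples are big. The number of big samples has expectation `M w_big ≥ α` and, as
a sum of independent indicators, variance at most its expectation, so by Chebyshev's inequality it
falls below half its expectation with probability at most `4/α = ε⁴/64`, which is at most `1/4` for
`ε ≤ 2`. -/

section SecondMoment

variable {Ω : Type*} [MeasurableSpace Ω] {P : Measure Ω} [IsProbabilityMeasure P]

theorem one_sub_variance_div_sq_le_measureReal_integral_sub_le {X : Ω → ℝ} (hX : MemLp X 2 P)
    {c : ℝ} (hc : 0 < c) : 1 - Var[X; P] / c ^ 2 ≤ P.real {ω | P[X] - c ≤ X ω} := by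
  have chebyshev : P.real {ω | c ≤ |X ω - P[X]|} ≤ Var[X; P] / c ^ 2 :=
    ENNReal.toReal_le_of_le_ofReal (div_nonneg (variance_nonneg X P) (sq_nonneg _))
      (meas_ge_le_variance_div_sq hX hc)
  have cover : {ω | P[X] - c ≤ X ω} ∪ {ω | c ≤ |X ω - P[X]|} = Set.univ := by
    refine Set.eq_univ_of_forall fun ω => ?_
    rcases le_or_gt (P[X] - c) (X ω) with hle | hlt
    · exact Or.inl hle
    · have hdev : c ≤ -(X ω - P[X]) := by linarith
      exact Or.inr (hdev.trans (neg_le_abs _))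
  have union_bound := measureReal_union_le (μ := P)
    {ω | P[X] - c ≤ X ω} {ω | c ≤ |X ω - P[X]|}
  rw [cover, probReal_univ] at union_bound
  linarith

theorem variance_le_integral_of_mem_Icc {X : Ω → ℝ} (hm : AEMeasurable X P)
    (hX : ∀ᵐ ω ∂P, X ω ∈ Set.Icc 0 1) : Var[X; P] ≤ P[X] := by
  have bhatia_davis := variance_le_sub_mul_sub hX hm
  nlinarith [sq_nonneg P[X]]

variable {κ : Type*} [Fintype κ]

theorem one_sub_div_le_measureReal_half_sum_integral_le {X : κ → Ω → ℝ}
    (hm : ∀ a, AEMeasurable (X a) P) (hX : ∀ a, ∀ᵐ ω ∂P, X a ω ∈ Set.Icc 0 1)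
    (hindep : Pairwise fun a b => X a ⟂ᵢ[P] X b) (hpos : 0 < ∑ a, P[X a]) :
    1 - 4 / ∑ a, P[X a] ≤ P.real {ω | (∑ a, P[X a]) / 2 ≤ ∑ a, X a ω} := by
  have hL2 (a : κ) : MemLp (X a) 2 P := memLp_of_bounded (hX a) (hm a).aestronglyMeasurable 2
  have hmean : P[∑ a, X a] = ∑ a, P[X a] := by
    simp only [Finset.sum_apply]
    exact integral_finsetSum _ fun a _ => (hL2 a).integrable one_le_two
  have hvar : Var[∑ a, X a; P] ≤ ∑ a, P[X a] := by
    rw [IndepFun.variance_sum (fun a _ => hL2 a) (hindep.set_pairwise _)]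
    exact Finset.sum_le_sum fun a _ => variance_le_integral_of_mem_Icc (hm a) (hX a)
  have chebyshev := one_sub_variance_div_sq_le_measureReal_integral_sub_le
    (memLp_finsetSum' Finset.univ fun a _ => hL2 a) (half_pos hpos)
  rw [hmean, sub_half] at chebyshev
  simp only [Finset.sum_apply] at chebyshev
  calc 1 - 4 / ∑ a, P[X a] = 1 - (∑ a, P[X a]) / ((∑ a, P[X a]) / 2) ^ 2 := by
        field_simp; norm_num
    _ ≤ 1 - Var[∑ a, X a; P] / ((∑ a, P[X a]) / 2) ^ 2 := by gcongr
    _ ≤ _ := chebyshev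

end SecondMoment

section ProductMeasure

variable {Ω κ : Type*} [MeasurableSpace Ω] {μ : Measure Ω} [IsProbabilityMeasure μ] [Fintype κ]
  {A : Set Ω}

theorem one_sub_div_le_pi_real_half_mul_le_sum_indicator (hA : MeasurableSet A)
    (hpos : 0 < Fintype.card κ * μ.real A) :
    1 - 4 / (Fintype.card κ * μ.real A) ≤ (Measure.pi fun _ : κ => μ).real
      {ω | Fintype.card κ * μ.real A / 2 ≤ ∑ a, A.indicator 1 (ω a)} := by
  let X (a : κ) (ω : κ → Ω) : ℝ := A.indicator 1 (ω a)
  have hmeas : Measurable (A.indicator (1 : Ω → ℝ)) := measurable_one.indicator hA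
  have hm (a : κ) : AEMeasurable (X a) (Measure.pi fun _ => μ) :=
    (hmeas.comp (measurable_pi_apply a)).aemeasurable
  have hX (a : κ) (ω : κ → Ω) : X a ω ∈ Set.Icc 0 1 :=
    ⟨Set.indicator_nonneg (fun _ _ => zero_le_one) _,
      Set.indicator_le_self' (fun _ _ => zero_le_one) _⟩
  have hindep : iIndepFun X (Measure.pi fun _ => μ) := iIndepFun_pi fun _ => hmeas.aemeasurable
  have hmean (a : κ) : ∫ ω, X a ω ∂(Measure.pi fun _ => μ) = μ.real A := by
    rw [integral_comp_eval (μ := fun _ => μ) hmeas.aestronglyMeasurable, integral_indicator_one hA]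
  have hsum : ∑ a, ∫ ω, X a ω ∂(Measure.pi fun _ => μ) = Fintype.card κ * μ.real A := by
    simp only [hmean, Finset.sum_const, Finset.card_univ, nsmul_eq_mul]
  have tail := one_sub_div_le_measureReal_half_sum_integral_le hm
    (fun a => .of_forall (hX a)) (fun _ _ hab => hindep.indepFun hab) (hsum ▸ hpos)
  rwa [hsum] at tail

theorem one_sub_div_le_pi_real_half_mul_le_sum (hA : MeasurableSet A) {m : ℝ} (hm : 0 < m)
    (hmA : m ≤ Fintype.card κ * μ.real A) {f : Ω → ℝ} (hf : 0 ≤ f) {τ : ℝ} (hτ : 0 ≤ τ)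
    (hAf : ∀ x ∈ A, τ ≤ f x) :
    1 - 4 / m ≤ (Measure.pi fun _ : κ => μ).real {ω | m / 2 * τ ≤ ∑ a, f (ω a)} := by
  have hind (x : Ω) : A.indicator 1 x * τ ≤ f x := by
    by_cases hx : x ∈ A
    · simpa [hx] using hAf x hx
    · simpa [hx] using hf x
  calc 1 - 4 / m ≤ 1 - 4 / (Fintype.card κ * μ.real A) := by gcongr
    _ ≤ (Measure.pi fun _ : κ => μ).real
          {ω | Fintype.card κ * μ.real A / 2 ≤ ∑ a, A.indicator 1 (ω a)} :=
      one_sub_div_le_pi_real_half_mul_le_sum_indicator hA (hm.trans_le hmA)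
    _ ≤ _ := measureReal_mono fun ω hω => ?_
  calc m / 2 * τ ≤ Fintype.card κ * μ.real A / 2 * τ := by gcongr
    _ ≤ (∑ a, A.indicator 1 (ω a)) * τ := mul_le_mul_of_nonneg_right hω hτ
    _ = ∑ a, A.indicator 1 (ω a) * τ := Finset.sum_mul ..
    _ ≤ ∑ a, f (ω a) := Finset.sum_le_sum fun a _ => hind (ω a)

end ProductMeasure

section FiniteDistribution

theorem pi_real_singleton {κ : Type*} [Fintype κ] {ι : κ → Type*} [∀ a, MeasurableSpace (ι a)]
    (μ : ∀ a, Measure (ι a)) [∀ a, SigmaFinite (μ a)] (s : ∀ a, ι a) :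
    (Measure.pi μ).real {s} = ∏ a, (μ a).real {s a} := by
  simp only [measureReal_def, Measure.pi_singleton, ENNReal.toReal_prod]

variable {ι κ : Type*} [Fintype ι] [Fintype κ]

theorem exists_isProbabilityMeasure_forall_real_singleton [MeasurableSpace ι]
    [MeasurableSingletonClass ι] {p : ι → ℝ} (hp : ∀ i, 0 ≤ p i) (hsum : ∑ i, p i = 1) :
    ∃ μ : Measure ι, IsProbabilityMeasure μ ∧ ∀ i, μ.real {i} = p i := by
  have hsum' : ∑ i, ENNReal.ofReal (p i) = 1 := by
    rw [← ENNReal.ofReal_sum_of_nonneg fun i _ => hp i, hsum, ENNReal.ofReal_one]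
  refine ⟨(PMF.ofFintype _ hsum').toMeasure, inferInstance, fun i => ?_⟩
  rw [measureReal_def, PMF.toMeasure_apply_singleton _ _ (measurableSet_singleton i),
    PMF.ofFintype_apply, ENNReal.toReal_ofReal (hp i)]

theorem measureReal_setOf_eq_sum_filter [MeasurableSpace ι] [MeasurableSingletonClass ι]
    (μ : Measure ι) [SigmaFinite μ] (E : ι → Prop) :
    μ.real {i | E i} = ∑ i with E i, μ.real {i} := by
  rw [sum_measureReal_singleton, Finset.coe_filter_univ]

theorem one_sub_div_le_sum_prod_of_half_mul_le_sum [DecidableEq κ] {p f : ι → ℝ}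
    (hp : ∀ i, 0 ≤ p i) (hsum : ∑ i, p i = 1) (hf : 0 ≤ f) {τ : ℝ} (hτ : 0 ≤ τ) {m : ℝ} (hm : 0 < m)
    (hmp : m ≤ Fintype.card κ * ∑ i with τ < f i, p i) :
    1 - 4 / m ≤ ∑ s : κ → ι with m / 2 * τ ≤ ∑ a, f (s a), ∏ a, p (s a) := by
  let _ : MeasurableSpace ι := ⊤
  obtain ⟨μ, _, hμ⟩ := exists_isProbabilityMeasure_forall_real_singleton hp hsum
  have hweight : μ.real {i | τ < f i} = ∑ i with τ < f i, p i := by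
    simp only [measureReal_setOf_eq_sum_filter, hμ]
  have tail := one_sub_div_le_pi_real_half_mul_le_sum (κ := κ)
    (.of_discrete : MeasurableSet {i | τ < f i}) hm (hweight ▸ hmp) hf hτ fun _ hi => hi.le
  simpa only [measureReal_setOf_eq_sum_filter, pi_real_singleton, hμ] using tail

end FiniteDistribution

theorem uniformity_test_many_big_elements_general {ι : Type*} [Fintype ι] {ε : ℝ} (hε : 0 < ε)
    {M : ℕ} (hM3 : (M : ℝ) ^ 3 = 32 * (Fintype.card ι : ℝ) / ε ^ 4)
    {p : ι → ℝ} (hp : ∀ i, 0 ≤ p i) (hsum : ∑ i, p i = 1)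
    (hmanybig : (2 ^ 8 / ε ^ 4) / (M : ℝ) ≤ ∑ i with p i > 1 / (2 * (M : ℝ) ^ 2), p i) :
    1 - ε ^ 4 / 64 ≤
      ∑ s : Fin M → ι with 2 * (M : ℝ) / Fintype.card ι ≤ ∑ a, p (s a), ∏ a, p (s a) := by
  have : Nonempty ι := by
    by_contra! h
    simp at hsum
  have hM : (0 : ℝ) < M := by
    have : (0 : ℝ) < M ^ 3 := by rw [hM3]; positivity
    exact (Odd.pow_pos_iff (by decide)).1 this
  have expected_big : 2 ^ 8 / ε ^ 4 ≤ M * ∑ i with p i > 1 / (2 * (M : ℝ) ^ 2), p i :=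
    (div_le_iff₀' hM).1 hmanybig
  have threshold :
      2 * (M : ℝ) / Fintype.card ι = 2 ^ 8 / ε ^ 4 / 2 * (1 / (2 * (M : ℝ) ^ 2)) := by
    have : (Fintype.card ι : ℝ) = M ^ 3 * ε ^ 4 / 32 := by rw [hM3]; field_simp
    rw [this]
    field_simp
    norm_num
  have failure : ε ^ 4 / 64 = 4 / (2 ^ 8 / ε ^ 4) := by field_simp; norm_num
  rw [threshold, failure]
  exact one_sub_div_le_sum_prod_of_half_mul_le_sum hp hsum hp (by positivity) (by positivity)
    (by rwa [Fintype.card_fin])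

/-- Many-big-elements case: if `p` is ε-nonuniform with big-element weight
`w_big > α/M` where `α = 2⁸/ε⁴` and `M³ = 32 N / ε⁴`, then `p_S ≥ 2M/N`
with probability at least `1/2` over `M` independent samples from `p`. -/
theorem uniformity_test_many_big_elements
    (ε : ℝ) (hε : 0 < ε) (hε2 : ε ≤ 2)
    (N M : ℕ) (hN : 0 < N) (hM : 0 < M)
    (hM3 : (M : ℝ) ^ 3 = 32 * (N : ℝ) / ε ^ 4)
    (p : Fin N → ℝ) (hp : ∀ i, 0 ≤ p i) (hsum : ∑ i, p i = 1)
    (hnonunif : ∑ i, |p i - 1 / (N : ℝ)| ≥ ε)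
    (hmanybig : (∑ i ∈ Finset.univ.filter (fun i => p i > 1 / (2 * (M : ℝ) ^ 2)), p i)
      > (2 ^ 8 / ε ^ 4) / (M : ℝ)) :
    (∑ s ∈ Finset.univ.filter (fun s : Fin M → Fin N =>
        2 * (M : ℝ) / (N : ℝ) ≤ ∑ a, p (s a)),
      ∏ a, p (s a)) ≥ 1 / 2 := by
  have general := uniformity_test_many_big_elements_general hε
    (by rwa [Fintype.card_fin]) hp hsum hmanybig.le
  rw [Fintype.card_fin] at general
  linarith [pow_le_pow_left₀ hε.le hε2 4]
end

section
/- Let 0 < ε ≤ 2 and let p, q be probability distributions on Fin N with ‖p − q‖₁ ≤ 2 − ε. Let B = {i : q i < (ε/4)·p i}. Then ∑_{i ∈ B} p i ≤ 1 − ε/4. -/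
open scoped Classical

/-!
Put `c = ε / 4`. On the set `B = {i | q i < c * p i}` the mass of `q` is at most `c`, so the mass of
`p` on `B` is at most `c` plus the excess of `p` over `q` on `B`. Since `p` and `q` have the same
total mass, any excess on `B` is matched by an equal deficit off `B`, so it is at most half of the
`L1`-distance.
-/

section SumFilter

variable {ι : Type*}

lemma two_nsmul_sum_le_sum_abs_of_sum_eq_zero {G : Type*} [AddCommGroup G] [LinearOrder G]
    [IsOrderedAddMonoid G] {s t : Finset ι} {f : ι → G} (hts : t ⊆ s) (hf : ∑ i ∈ s, f i = 0) :
    2 • ∑ i ∈ t, f i ≤ ∑ i ∈ s, |f i| := by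
  have deficit_eq : ∑ i ∈ s \ t, -f i = ∑ i ∈ t, f i := by
    rw [Finset.sum_neg_distrib, neg_eq_iff_add_eq_zero, Finset.sum_sdiff hts, hf]
  calc 2 • ∑ i ∈ t, f i
      = ∑ i ∈ s \ t, -f i + ∑ i ∈ t, f i := by rw [deficit_eq, two_nsmul]
    _ ≤ ∑ i ∈ s \ t, |f i| + ∑ i ∈ t, |f i| := by
        gcongr
        · exact neg_le_abs _
        · exact le_abs_self _
    _ = ∑ i ∈ s, |f i| := Finset.sum_sdiff hts

theorem small_q_set_bound_general {K : Type*} [Field K] [LinearOrder K] [IsStrictOrderedRing K]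
    {s : Finset ι} {p q : ι → K} {c : K} (hc : 0 ≤ c) (hp : ∀ i ∈ s, 0 ≤ p i)
    (hpq : ∑ i ∈ s, p i = ∑ i ∈ s, q i) :
    ∑ i ∈ s with q i < c * p i, p i ≤ c * ∑ i ∈ s, p i + (∑ i ∈ s, |p i - q i|) / 2 := by
  set B := s.filter fun i ↦ q i < c * p i
  have hBs : B ⊆ s := Finset.filter_subset _ _
  have q_mass_le : ∑ i ∈ B, q i ≤ c * ∑ i ∈ s, p i := calc
    ∑ i ∈ B, q i ≤ ∑ i ∈ B, c * p i :=
      Finset.sum_le_sum fun _ hi ↦ (Finset.mem_filter.mp hi).2.le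
    _ = c * ∑ i ∈ B, p i := (Finset.mul_sum _ _ _).symm
    _ ≤ c * ∑ i ∈ s, p i := by
      gcongr c * ?_
      exact Finset.sum_le_sum_of_subset_of_nonneg hBs fun i hi _ ↦ hp i hi
  have excess_le : ∑ i ∈ B, (p i - q i) ≤ (∑ i ∈ s, |p i - q i|) / 2 := by
    rw [le_div_iff₀' two_pos, ← Nat.cast_ofNat, ← nsmul_eq_mul]
    exact two_nsmul_sum_le_sum_abs_of_sum_eq_zero hBs
      (by rw [Finset.sum_sub_distrib, hpq, sub_self])
  calc ∑ i ∈ B, p i = ∑ i ∈ B, q i + ∑ i ∈ B, (p i - q i) := by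
        rw [Finset.sum_sub_distrib, add_sub_cancel]
    _ ≤ c * ∑ i ∈ s, p i + (∑ i ∈ s, |p i - q i|) / 2 := add_le_add q_mass_le excess_le

end SumFilter

/-- If `‖p − q‖₁ ≤ 2 − ε`, then the set `B = {i : q i < (ε/4)·p i}` has
`p`-probability at most `1 − ε/4`. -/
theorem small_q_set_bound
    (N : ℕ) (ε : ℝ) (hε : 0 < ε) (hε2 : ε ≤ 2)
    (p q : Fin N → ℝ)
    (hp : ∀ i, 0 ≤ p i) (hpsum : ∑ i, p i = 1)
    (hq : ∀ i, 0 ≤ q i) (hqsum : ∑ i, q i = 1)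
    (hdist : ∑ i, |p i - q i| ≤ 2 - ε) :
    ∑ i ∈ Finset.univ.filter (fun i => q i < ε / 4 * p i), p i ≤ 1 - ε / 4 := by
  have := small_q_set_bound_general (c := ε / 4) (by positivity) (fun i _ ↦ hp i)
    (hpsum.trans hqsum.symm)
  rw [hpsum] at this
  linarith
end

section
/- Let ε > 0, let p be a probability distribution on Fin N, and let C ⊆ Fin N satisfy ∑_{i ∈ C} p i ≤ ε/32. Let i_1, …, i_M be M independent samples from p and let A ⊆ Fin N be the set of elements appearing at least once among the samples. Then Prob[ |A ∩ C| ≥ (ε/16)·M ] ≤ exp(−M·ε²/2⁹). -/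
open scoped Classical

/-!
Every element of `A ∩ C` is hit by some sample, so `|A ∩ C|` is at most the number of samples that
land in `C`. That number is a sum of `M` independent indicators of mean at most `ε/32`, so exceeding
`(ε/16)·M` is a deviation of `ε/32` per sample, and Hoeffding's inequality bounds its probability by
`exp(-2M(ε/32)²) = exp(-Mε²/2⁹)`.
-/

open MeasureTheory ProbabilityTheory Finset

section IndependentEvents

variable {Ω : Type*} {mΩ : MeasurableSpace Ω} {μ : Measure Ω}

lemma hasSubgaussianMGF_indicator_sub_measureReal [IsProbabilityMeasure μ] {E : Set Ω}
    (hE : NullMeasurableSet E μ) :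
    HasSubgaussianMGF (fun ω ↦ E.indicator 1 ω - μ.real E) (1 / 4) μ := by
  have hbounds (ω : Ω) : E.indicator (1 : Ω → ℝ) ω ∈ Set.Icc 0 1 :=
    ⟨Set.indicator_nonneg (fun _ _ ↦ zero_le_one) ω,
      Set.indicator_le_self' (fun _ _ ↦ zero_le_one) ω⟩
  have hmean : μ[E.indicator (1 : Ω → ℝ)] = μ.real E := by
    rw [integral_indicator₀ hE]
    simp
  have hmeas : AEMeasurable (E.indicator (1 : Ω → ℝ)) μ := aemeasurable_one.indicator₀ hE
  convert hasSubgaussianMGF_of_mem_Icc hmeas (.of_forall hbounds) using 1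
  · rw [hmean]
  · norm_num

lemma measureReal_card_mem_ge_le_of_iIndepSet {ι : Type*} {E : ι → Set Ω} (hindep : iIndepSet E μ)
    {s : Finset ι} (hE : ∀ i ∈ s, NullMeasurableSet (E i) μ) {t : ℝ} (ht : 0 ≤ t) :
    μ.real {ω | ∑ i ∈ s, μ.real (E i) + #s * t ≤ #{i ∈ s | ω ∈ E i}} ≤
      Real.exp (-2 * #s * t ^ 2) := by
  have := hindep.isProbabilityMeasure
  have hindepFun : iIndepFun (fun i ω ↦ (E i).indicator (1 : Ω → ℝ) ω - μ.real (E i)) μ :=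
    (hindep.iIndepFun_indicator (β := ℝ)).comp (fun i x ↦ x - μ.real (E i)) fun _ ↦ by fun_prop
  have hcount (ω : Ω) : (#{i ∈ s | ω ∈ E i} : ℝ) = ∑ i ∈ s, (E i).indicator 1 ω := by
    simp [Set.indicator_apply]
  have htail := HasSubgaussianMGF.measure_sum_ge_le_of_iIndepFun hindepFun
    (fun i hi ↦ hasSubgaussianMGF_indicator_sub_measureReal (hE i hi))
    (mul_nonneg (Nat.cast_nonneg #s) ht)
  simp only [sum_sub_distrib, ← hcount, le_sub_iff_add_le'] at htail
  convert htail using 2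
  push_cast [sum_const, nsmul_eq_mul]
  rcases eq_or_ne (#s : ℝ) 0 with hs | hs
  · simp [hs]
  · field_simp
    ring

end IndependentEvents

section ProductMeasure

variable {ι : Type*} [Fintype ι]

lemma iIndepSet_pi_preimage_eval {α : ι → Type*} [∀ i, MeasurableSpace (α i)]
    (μ : ∀ i, Measure (α i)) [∀ i, IsProbabilityMeasure (μ i)] {E : ∀ i, Set (α i)}
    (hE : ∀ i, MeasurableSet (E i)) :
    iIndepSet (fun i ↦ Function.eval i ⁻¹' E i) (Measure.pi μ) := by
  have hindepFun : iIndepFun (fun i (x : ∀ i, α i) ↦ x i) (Measure.pi μ) :=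
    iIndepFun_pi (X := fun _ ↦ id) fun _ ↦ aemeasurable_id
  rw [iIndepSet_iff_meas_biInter fun i ↦ (hE i).preimage (measurable_pi_apply i)]
  exact fun s ↦ hindepFun.measure_inter_preimage_eq_mul s fun i _ ↦ hE i

lemma measureReal_pi_card_mem_ge_le {α : Type*} [MeasurableSpace α] (μ : Measure α)
    [IsProbabilityMeasure μ] {E : Set α} (hE : MeasurableSet E) {t : ℝ} (ht : 0 ≤ t) :
    (Measure.pi fun _ : ι ↦ μ).real {x | (μ.real E + t) * Fintype.card ι ≤ #{i | x i ∈ E}} ≤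
      Real.exp (-2 * Fintype.card ι * t ^ 2) := by
  have hmarginal (i : ι) : (Measure.pi fun _ ↦ μ).real (Function.eval i ⁻¹' E) = μ.real E :=
    (measurePreserving_eval (fun _ ↦ μ) i).measureReal_preimage hE.nullMeasurableSet
  have htail := measureReal_card_mem_ge_le_of_iIndepSet
    (iIndepSet_pi_preimage_eval (fun _ : ι ↦ μ) fun _ ↦ hE) (s := univ)
    (fun i _ ↦ (hE.preimage (measurable_pi_apply i)).nullMeasurableSet) ht
  simpa only [hmarginal, sum_const, nsmul_eq_mul, card_univ, Set.mem_preimage, Function.eval,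
    ← mul_add, mul_comm (Fintype.card ι : ℝ) (μ.real E + t)] using htail

lemma measureReal_pi_finset {α : ι → Type*} [∀ i, MeasurableSpace (α i)]
    [∀ i, MeasurableSingletonClass (α i)] (μ : ∀ i, Measure (α i)) [∀ i, SigmaFinite (μ i)]
    (F : Finset (∀ i, α i)) :
    (Measure.pi μ).real (F : Set (∀ i, α i)) = ∑ x ∈ F, ∏ i, (μ i).real {x i} := by
  rw [← sum_measureReal_singleton]
  exact sum_congr rfl fun x _ ↦ by
    simp only [Measure.real, Measure.pi_singleton, ENNReal.toReal_prod]

end ProductMeasure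

lemma exists_isProbabilityMeasure_measureReal_singleton {α : Type*} [Fintype α]
    [MeasurableSpace α] [MeasurableSingletonClass α] {p : α → ℝ}
    (hp : ∀ i, 0 ≤ p i) (hsum : ∑ i, p i = 1) :
    ∃ μ : Measure α, IsProbabilityMeasure μ ∧ ∀ i, μ.real {i} = p i := by
  have hmass : ∑ i, ENNReal.ofReal (p i) = 1 := by
    rw [← ENNReal.ofReal_sum_of_nonneg fun i _ ↦ hp i, hsum, ENNReal.ofReal_one]
  refine ⟨(PMF.ofFintype _ hmass).toMeasure, inferInstance, fun i ↦ ?_⟩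
  rw [measureReal_def, PMF.toMeasure_apply_singleton _ _ (measurableSet_singleton i),
    PMF.ofFintype_apply, ENNReal.toReal_ofReal (hp i)]

lemma card_image_inter_le_card_filter_mem {ι α : Type*} [DecidableEq α] (s : Finset ι)
    (x : ι → α) (C : Finset α) : #(s.image x ∩ C) ≤ #{i ∈ s | x i ∈ C} := by
  rw [← filter_mem_eq_inter, filter_image]
  exact card_image_le

theorem intersection_with_C_bound_general {ι α : Type*} [Fintype ι] [DecidableEq ι]
    [Fintype α] [DecidableEq α] {p : α → ℝ} (hp : ∀ i, 0 ≤ p i) (hsum : ∑ i, p i = 1)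
    {C : Finset α} {q t : ℝ} (hC : ∑ i ∈ C, p i ≤ q) (ht : 0 ≤ t) :
    ∑ s : ι → α with (q + t) * Fintype.card ι ≤ #(univ.image s ∩ C), ∏ a, p (s a) ≤
      Real.exp (-2 * Fintype.card ι * t ^ 2) := by
  let : MeasurableSpace α := ⊤
  obtain ⟨μ, _, hμ⟩ := exists_isProbabilityMeasure_measureReal_singleton hp hsum
  simp only [← hμ, sum_measureReal_singleton] at hC ⊢
  rw [← measureReal_pi_finset]
  refine (measureReal_mono fun s hs ↦ ?_).trans
    (measureReal_pi_card_mem_ge_le μ C.measurableSet ht)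
  simp only [Set.mem_ofPred_eq, mem_coe]
  calc (μ.real C + t) * Fintype.card ι
    _ ≤ (q + t) * Fintype.card ι := by gcongr
    _ ≤ #(univ.image s ∩ C) := (mem_filter.1 hs).2
    _ ≤ #{a | s a ∈ C} := mod_cast card_image_inter_le_card_filter_mem univ s C

/-- Chernoff-type bound: if `C` has `p`-probability at most `ε/32`, then the set
`A` of elements appearing among `M` independent samples from `p` satisfies
`|A ∩ C| ≥ (ε/16)·M` with probability at most `exp(−Mε²/2⁹)`. -/
theorem intersection_with_C_bound
    (N M : ℕ) (ε : ℝ) (hε : 0 < ε)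
    (p : Fin N → ℝ) (hp : ∀ i, 0 ≤ p i) (hsum : ∑ i, p i = 1)
    (C : Finset (Fin N)) (hC : ∑ i ∈ C, p i ≤ ε / 32) :
    (∑ s ∈ Finset.univ.filter (fun s : Fin M → Fin N =>
        ε / 16 * (M : ℝ) ≤ ((Finset.image s Finset.univ ∩ C).card : ℝ)),
      ∏ a, p (s a)) ≤ Real.exp (-(M : ℝ) * ε ^ 2 / 2 ^ 9) := by
  have hthreshold : ε / 32 + ε / 32 = ε / 16 := by ring
  have hexponent : -2 * (M : ℝ) * (ε / 32) ^ 2 = -(M : ℝ) * ε ^ 2 / 2 ^ 9 := by ring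
  simpa only [Fintype.card_fin, hthreshold, hexponent] using
    intersection_with_C_bound_general (ι := Fin M) hp hsum hC (t := ε / 32) (by positivity)
end

section
/- Let 0 < ε ≤ 2 and let p, q be probability distributions on Fin N with ‖p − q‖₁ ≤ 2 − ε. Let B = {i : q i < (ε/4)·p i} and C = {i : p i ≤ ε/(32N)}, and let M be a positive integer with M ≥ 2⁹/ε². Let i_1, …, i_M be M independent samples from p. Then Prob[ #{a ∈ {1,…,M} : i_a ∈ Bᶜ ∩ Cᶜ} ≥ (ε/16)·M ] ≥ 1/2, where Bᶜ, Cᶜ denote complements in Fin N. -/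
open scoped Classical

/-!
Since `∑ i, min (p i) (q i) = 1 - ‖p - q‖₁ / 2 ≥ ε / 2`, and the overlap `min (p i) (q i)` is at
most `(ε / 4) * p i` on `B` and at most `ε / (32 * N)` on `C`, the good set `Bᶜ ∩ Cᶜ` has
`p`-mass at least `ε / 2 - ε / 4 - ε / 32 = 7 * ε / 32`. The expected number of good samples
therefore exceeds the threshold `(ε / 16) * M` by a constant factor, so the exponential moment
method bounds the probability of falling below the threshold by `exp (-(ε / 16) * M)`.
-/

section IIDSampling

open Finset Real

variable {ι κ : Type*} [Fintype ι] [Fintype κ] [DecidableEq κ]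

/-- The probability of the event `E` when independent samples with weights `p`, indexed by `κ`, are
drawn from `ι`. The event carries a decidability instance so that the definition unfolds to any
concrete filtered sum. -/
noncomputable def iidProb (p : ι → ℝ) (E : (κ → ι) → Prop) [DecidablePred E] : ℝ :=
  ∑ s with E s, ∏ a, p (s a)

theorem sum_prod_apply_eq_sum_pow {R : Type*} [CommSemiring R] (f : ι → R) :
    ∑ s : κ → ι, ∏ a, f (s a) = (∑ i, f i) ^ Fintype.card κ := by
  rw [← Fintype.prod_sum fun _ => f, prod_const, card_univ]

theorem iidProb_add_iidProb_not {p : ι → ℝ} (hp_sum : ∑ i, p i = 1)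
    (E : (κ → ι) → Prop) [DecidablePred E] :
    iidProb p E + iidProb p (fun s => ¬ E s) = 1 := by
  rw [iidProb, iidProb, sum_filter_add_sum_filter_not, sum_prod_apply_eq_sum_pow, hp_sum, one_pow]

theorem iidProb_le_sum_prod_mul {p : ι → ℝ} (hp : ∀ i, 0 ≤ p i)
    {E : (κ → ι) → Prop} [DecidablePred E] {f : (κ → ι) → ℝ}
    (hf : ∀ s, 0 ≤ f s) (hEf : ∀ s, E s → 1 ≤ f s) :
    iidProb p E ≤ ∑ s, (∏ a, p (s a)) * f s := by
  have hprod (s : κ → ι) : 0 ≤ ∏ a, p (s a) := prod_nonneg fun a _ => hp (s a)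
  calc iidProb p E ≤ ∑ s with E s, (∏ a, p (s a)) * f s :=
        sum_le_sum fun s hs => le_mul_of_one_le_right (hprod s) (hEf s (mem_filter.mp hs).2)
    _ ≤ ∑ s, (∏ a, p (s a)) * f s :=
        sum_le_sum_of_subset_of_nonneg (filter_subset _ _) fun s _ _ => mul_nonneg (hprod s) (hf s)

theorem sum_prod_mul_exp_neg_mul_card {p : ι → ℝ} (hp_sum : ∑ i, p i = 1)
    (G : ι → Prop) [DecidablePred G] (c : ℝ) :
    ∑ s : κ → ι, (∏ a, p (s a)) * exp (-c * #{a | G (s a)}) =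
      (1 - (1 - exp (-c)) * ∑ i with G i, p i) ^ Fintype.card κ := by
  have hfactor (s : κ → ι) :
      exp (-c * #{a | G (s a)}) = ∏ a, if G (s a) then exp (-c) else 1 := by
    rw [prod_ite, prod_const, prod_const_one, mul_one, ← exp_nat_mul, mul_comm]
  have hmean : ∑ i, p i * (if G i then exp (-c) else 1) =
      1 - (1 - exp (-c)) * ∑ i with G i, p i := by
    calc ∑ i, p i * (if G i then exp (-c) else 1)
        = ∑ i, (p i - (1 - exp (-c)) * if G i then p i else 0) :=
          sum_congr rfl fun i _ => by split_ifs <;> ring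
      _ = 1 - (1 - exp (-c)) * ∑ i with G i, p i := by
          rw [sum_sub_distrib, ← mul_sum, ← sum_filter, hp_sum]
  simp only [hfactor, ← prod_mul_distrib]
  rw [sum_prod_apply_eq_sum_pow fun i => p i * if G i then exp (-c) else 1, hmean]

theorem iidProb_card_lt_le_exp {p : ι → ℝ} (hp : p ∈ stdSimplex ℝ ι)
    (G : ι → Prop) [DecidablePred G] {c : ℝ} (hc : 0 ≤ c) (t : ℝ) :
    iidProb p (fun s : κ → ι => (#{a | G (s a)} : ℝ) < t) ≤
      exp (c * t - (1 - exp (-c)) * (Fintype.card κ * ∑ i with G i, p i)) := by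
  set g := ∑ i with G i, p i
  have hg_le_one : g ≤ 1 :=
    hp.2 ▸ sum_le_sum_of_subset_of_nonneg (filter_subset _ _) fun i _ _ => hp.1 i
  have hexp_le_one : exp (-c) ≤ 1 := exp_le_one_iff.mpr (neg_nonpos.mpr hc)
  have hbase : 0 ≤ 1 - (1 - exp (-c)) * g := by
    nlinarith [exp_pos (-c)]
  calc iidProb p (fun s : κ → ι => (#{a | G (s a)} : ℝ) < t)
      ≤ ∑ s : κ → ι, (∏ a, p (s a)) * exp (c * t + -c * #{a | G (s a)}) :=
        iidProb_le_sum_prod_mul hp.1 (fun _ => (exp_pos _).le) fun s hs =>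
          one_le_exp (by nlinarith)
    _ = exp (c * t) * (1 - (1 - exp (-c)) * g) ^ Fintype.card κ := by
        rw [← sum_prod_mul_exp_neg_mul_card hp.2, mul_sum]
        simp only [exp_add, mul_left_comm]
    _ ≤ exp (c * t) * exp (-((1 - exp (-c)) * g)) ^ Fintype.card κ := by
        gcongr
        exact one_sub_le_exp_neg _
    _ = exp (c * t - (1 - exp (-c)) * (Fintype.card κ * g)) := by
        rw [← exp_nat_mul, ← exp_add]
        ring_nf

end IIDSampling

section Overlap

open Finset

variable {ι : Type*} [Fintype ι] {p q : ι → ℝ}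

theorem sum_min_eq_one_sub_half_sum_abs_sub (hp_sum : ∑ i, p i = 1) (hq_sum : ∑ i, q i = 1) :
    ∑ i, min (p i) (q i) = 1 - (∑ i, |p i - q i|) / 2 := by
  simp only [inf_eq_half_smul_add_sub_abs_sub' ℝ, smul_eq_mul, abs_sub_comm (q _)]
  rw [← mul_sum, sum_sub_distrib, sum_add_distrib, hp_sum, hq_sum]
  ring

theorem sum_min_sub_le_sum_filter (hp : p ∈ stdSimplex ℝ ι) {α β : ℝ} (hα : 0 ≤ α) (hβ : 0 ≤ β) :
    ∑ i, min (p i) (q i) - α - Fintype.card ι * β ≤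
      ∑ i with ¬ q i < α * p i ∧ ¬ p i ≤ β, p i := by
  have hpoint (i : ι) : min (p i) (q i) - α * p i - β ≤
      if ¬ q i < α * p i ∧ ¬ p i ≤ β then p i else 0 := by
    have hαp := mul_nonneg hα (hp.1 i)
    grind
  calc ∑ i, min (p i) (q i) - α - Fintype.card ι * β
      = ∑ i, (min (p i) (q i) - α * p i - β) := by
        rw [sum_sub_distrib, sum_sub_distrib, ← mul_sum, hp.2, sum_const, card_univ,
          nsmul_eq_mul, mul_one]
    _ ≤ _ := by
        rw [sum_filter]
        exact sum_le_sum fun i _ => hpoint i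

theorem le_sum_filter_of_sum_abs_sub_le (hp : p ∈ stdSimplex ℝ ι) (hq_sum : ∑ i, q i = 1)
    {ε : ℝ} (hε : 0 ≤ ε) (hdist : ∑ i, |p i - q i| ≤ 2 - ε) :
    7 * ε / 32 ≤
      ∑ i with ¬ q i < ε / 4 * p i ∧ ¬ p i ≤ ε / (32 * Fintype.card ι), p i := by
  have : Nonempty ι := by
    by_contra! h
    simpa using hp.2
  have hcard : (Fintype.card ι : ℝ) * (ε / (32 * Fintype.card ι)) = ε / 32 := by
    field_simp
  have hmass := sum_min_sub_le_sum_filter (q := q) hp (div_nonneg hε zero_le_four)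
    (show 0 ≤ ε / (32 * Fintype.card ι) by positivity)
  rw [sum_min_eq_one_sub_half_sum_abs_sub hp.2 hq_sum, hcard] at hmass
  linarith

end Overlap

section GoodSamples

open Finset Real

theorem many_good_samples_general {ι κ : Type*} [Fintype ι] [Fintype κ] [DecidableEq κ]
    {ε : ℝ} (hε : 0 ≤ ε) {p q : ι → ℝ} (hp : p ∈ stdSimplex ℝ ι) (hq : q ∈ stdSimplex ℝ ι)
    (hdist : ∑ i, |p i - q i| ≤ 2 - ε) :
    1 - exp (-(ε / 16 * Fintype.card κ)) ≤
      iidProb p (fun s : κ → ι => ε / 16 * (Fintype.card κ : ℝ) ≤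
        (#{a | ¬ (q (s a) < ε / 4 * p (s a)) ∧
          ¬ (p (s a) ≤ ε / (32 * (Fintype.card ι : ℝ)))} : ℝ)) := by
  set t := ε / 16 * (Fintype.card κ : ℝ)
  set G := fun i => ¬ (q i < ε / 4 * p i) ∧ ¬ (p i ≤ ε / (32 * (Fintype.card ι : ℝ)))
  have hmass : 7 * ε / 32 ≤ ∑ i with G i, p i :=
    le_sum_filter_of_sum_abs_sub_le hp hq.2 hε hdist
  have hmean : 7 / 2 * t ≤ Fintype.card κ * ∑ i with G i, p i :=
    calc 7 / 2 * t = Fintype.card κ * (7 * ε / 32) := by ring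
      _ ≤ Fintype.card κ * ∑ i with G i, p i := by gcongr
  have hexponent : 1 * t - (1 - exp (-1)) * (Fintype.card κ * ∑ i with G i, p i) ≤ -t := by
    have hrate : 4 / 7 ≤ 1 - exp (-1) := by linarith [exp_neg_one_lt_d9]
    have ht : 0 ≤ 7 / 2 * t := by positivity
    linarith [mul_le_mul hrate hmean ht (by linarith)]
  have htail := (iidProb_card_lt_le_exp (κ := κ) hp G zero_le_one t).trans
    (exp_le_exp.mpr hexponent)
  have hcompl := iidProb_add_iidProb_not hp.2 fun s : κ → ι => t ≤ #{a | G (s a)}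
  simp only [not_le] at hcompl
  linarith

theorem half_le_one_sub_exp_neg_of_div_sq_le {ε M : ℝ} (hε : 0 < ε) (hε2 : ε ≤ 2)
    (hMε : 2 ^ 9 / ε ^ 2 ≤ M) :
    1 / 2 ≤ 1 - exp (-(ε / 16 * M)) := by
  have hMε_mul : 2 ^ 9 ≤ M * ε ^ 2 := (div_le_iff₀ (by positivity)).mp hMε
  have hone : 1 ≤ ε / 16 * M := by nlinarith
  linarith [exp_le_exp.mpr (neg_le_neg hone), exp_neg_one_lt_d9]

end GoodSamples

/-- If `‖p − q‖₁ ≤ 2 − ε` and `M ≥ 2⁹/ε²`, then with probability at least `1/2`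
at least `(ε/16)·M` of the `M` independent samples from `p` land outside both
`B = {i : q i < (ε/4)·p i}` and `C = {i : p i ≤ ε/(32N)}`. -/
theorem many_good_samples
    (N M : ℕ) (ε : ℝ) (hε : 0 < ε) (hε2 : ε ≤ 2)
    (hM : 0 < M) (hMε : (2 : ℝ) ^ 9 / ε ^ 2 ≤ (M : ℝ))
    (p q : Fin N → ℝ)
    (hp : ∀ i, 0 ≤ p i) (hpsum : ∑ i, p i = 1)
    (hq : ∀ i, 0 ≤ q i) (hqsum : ∑ i, q i = 1)
    (hdist : ∑ i, |p i - q i| ≤ 2 - ε) :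
    (∑ s ∈ Finset.univ.filter (fun s : Fin M → Fin N =>
        ε / 16 * (M : ℝ) ≤
          ((Finset.univ.filter (fun a : Fin M =>
            ¬ (q (s a) < ε / 4 * p (s a)) ∧ ¬ (p (s a) ≤ ε / (32 * (N : ℝ))))).card : ℝ)),
      ∏ a, p (s a)) ≥ 1 / 2 := by
  have hgeneral := many_good_samples_general (κ := Fin M) hε.le ⟨hp, hpsum⟩ ⟨hq, hqsum⟩ hdist
  exact (half_le_one_sub_exp_neg_of_div_sq_le hε hε2 hMε).trans
    (by simpa only [iidProb, Fintype.card_fin] using hgeneral)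
end

section
/- Let 0 < ε ≤ 2 and let N, M be positive integers with 2⁹/ε² ≤ M ≤ N. Let p, q be probability distributions on Fin N with ‖p − q‖₁ ≤ 2 − ε. Let i_1, …, i_M be M independent samples from p, let A ⊆ Fin N be the set of elements appearing at least once among the samples, and let q_A = ∑_{i ∈ A} q i. Then Prob[ q_A ≥ ε³·M/(2¹¹·N) ] ≥ 1/2. -/
open scoped Classical

/-!
Let `r = min p q`, which has total mass at least `θ = ε / 2`, and let `t` be the threshold for
`q_A`. If some element has `t ≤ r i` and `1 ≤ M r i`, it is sampled with probability at least `1/2`,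
and it alone contributes `t` to `q_A`. Otherwise apply Chebyshev's inequality to
`W = ∑ i ∈ A, min (r i) t`, which is at most `q_A`. The events `i ∈ A` are pairwise negatively
correlated and the weights are at most `t`, so `Var W ≤ t 𝔼 W`; the absence of heavy elements gives
`4 t ≤ 𝔼 W`.

This works for `t = θ² M / (32 N)` as soon as `16 ≤ θ M ≤ 2 N`.
-/

open Finset

section Expectation

variable {ι : Type*} [Fintype ι] {M : ℕ} {p : ι → ℝ}

/-- The expectation of a function of `M` independent samples from `p`, as a linear functional. It is
defined for arbitrary real weights `p`. -/
noncomputable def sampleExpectation (p : ι → ℝ) : ((Fin M → ι) → ℝ) →ₗ[ℝ] ℝ :=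
  ∑ s, (∏ a, p (s a)) • LinearMap.proj s

/-- The variance of a function of `M` independent samples from `p`. -/
noncomputable def sampleVariance (p : ι → ℝ) (f : (Fin M → ι) → ℝ) : ℝ :=
  sampleExpectation p fun s ↦ (f s - sampleExpectation p f) ^ 2

/-- The probability that a tuple of `M` independent samples from `p` lies in `E`. -/
noncomputable def sampleProbability (p : ι → ℝ) (E : Set (Fin M → ι)) : ℝ :=
  sampleExpectation p (E.indicator 1)

theorem sampleExpectation_apply (p : ι → ℝ) (f : (Fin M → ι) → ℝ) :
    sampleExpectation p f = ∑ s, (∏ a, p (s a)) * f s := by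
  simp [sampleExpectation]

theorem sampleExpectation_prod (p f : ι → ℝ) :
    sampleExpectation p (fun s : Fin M → ι ↦ ∏ a, f (s a)) = (∑ i, p i * f i) ^ M := by
  simp only [sampleExpectation_apply, Fintype.sum_pow, prod_mul_distrib]

theorem sampleExpectation_one (hpsum : ∑ i, p i = 1) :
    sampleExpectation p (1 : (Fin M → ι) → ℝ) = 1 := by
  simpa [hpsum, Pi.one_def] using sampleExpectation_prod (M := M) p 1

theorem sampleExpectation_mono (hp : ∀ i, 0 ≤ p i) {f g : (Fin M → ι) → ℝ} (hfg : f ≤ g) :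
    sampleExpectation p f ≤ sampleExpectation p g := by
  simp only [sampleExpectation_apply]
  exact sum_le_sum fun s _ ↦
    mul_le_mul_of_nonneg_left (hfg s) (prod_nonneg fun a _ ↦ hp (s a))

theorem sampleVariance_eq_sub (hpsum : ∑ i, p i = 1) (f : (Fin M → ι) → ℝ) :
    sampleVariance p f = sampleExpectation p (f * f) - sampleExpectation p f ^ 2 := by
  set μ := sampleExpectation p f with hμ
  have expand : (fun s ↦ (f s - μ) ^ 2) = f * f - (2 * μ) • f + μ ^ 2 • 1 := by
    ext s
    simp only [Pi.add_apply, Pi.sub_apply, Pi.mul_apply, Pi.smul_apply, Pi.one_apply, smul_eq_mul]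
    ring
  rw [sampleVariance, ← hμ, expand, map_add, map_sub, map_smul, map_smul,
    sampleExpectation_one hpsum, ← hμ]
  simp only [smul_eq_mul]
  ring

theorem sampleProbability_eq_sum_filter (p : ι → ℝ) (P : (Fin M → ι) → Prop) [DecidablePred P] :
    sampleProbability p {s | P s} = ∑ s with P s, ∏ a, p (s a) := by
  simp [sampleProbability, sampleExpectation_apply, Set.indicator_apply, sum_filter]

theorem sampleProbability_mono (hp : ∀ i, 0 ≤ p i) {E F : Set (Fin M → ι)} (hEF : E ⊆ F) :
    sampleProbability p E ≤ sampleProbability p F :=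
  sampleExpectation_mono hp (Set.indicator_le_indicator_of_subset hEF fun _ ↦ zero_le_one)

theorem sampleProbability_compl (hpsum : ∑ i, p i = 1) (E : Set (Fin M → ι)) :
    sampleProbability p Eᶜ = 1 - sampleProbability p E := by
  rw [sampleProbability, Set.indicator_compl, map_sub, sampleExpectation_one hpsum,
    sampleProbability]

theorem mul_sampleProbability_le_sampleExpectation (hp : ∀ i, 0 ≤ p i) {E : Set (Fin M → ι)}
    {f : (Fin M → ι) → ℝ} {c : ℝ} (hf : 0 ≤ f) (hc : ∀ s ∈ E, c ≤ f s) :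
    c * sampleProbability p E ≤ sampleExpectation p f := by
  rw [sampleProbability, ← smul_eq_mul, ← map_smul]
  refine sampleExpectation_mono hp fun s ↦ ?_
  by_cases hs : s ∈ E
  · simpa [hs] using hc s hs
  · simpa [hs] using hf s

theorem sq_mul_sampleProbability_lt_le_variance (hp : ∀ i, 0 ≤ p i) (f : (Fin M → ι) → ℝ) {t : ℝ}
    (ht : t ≤ sampleExpectation p f) :
    (sampleExpectation p f - t) ^ 2 * sampleProbability p {s | f s < t} ≤ sampleVariance p f := by
  refine mul_sampleProbability_le_sampleExpectation hp (fun s ↦ sq_nonneg _) fun s hs ↦ ?_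
  have hs : f s < t := hs
  rw [sub_sq_comm (f s)]
  exact pow_le_pow_left₀ (by linarith) (by linarith) 2

theorem half_le_sampleProbability_of_variance_le (hp : ∀ i, 0 ≤ p i) (hpsum : ∑ i, p i = 1)
    {f : (Fin M → ι) → ℝ} {t : ℝ} (ht : 0 < t) (hmean : 4 * t ≤ sampleExpectation p f)
    (hvar : sampleVariance p f ≤ t * sampleExpectation p f) :
    1 / 2 ≤ sampleProbability p {s | t ≤ f s} := by
  have chebyshev :=
    (sq_mul_sampleProbability_lt_le_variance hp f (by linarith : t ≤ _)).trans hvar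
  set μ := sampleExpectation p f
  have ratio : t * μ ≤ (μ - t) ^ 2 * (1 / 2) := by nlinarith
  have lower_tail : sampleProbability p {s | f s < t} ≤ 1 / 2 :=
    le_of_mul_le_mul_left (chebyshev.trans ratio) (pow_pos (by linarith) 2)
  have compl := sampleProbability_compl hpsum {s | t ≤ f s}
  simp only [Set.compl_ofPred, not_le] at compl
  linarith

end Expectation

theorem min_one_mul_div_two_le_one_sub_one_sub_pow {x : ℝ} (hx : 0 ≤ x) (hx1 : x ≤ 1) (n : ℕ) :
    min 1 (n * x) / 2 ≤ 1 - (1 - x) ^ n := by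
  have bernoulli : 1 + n * x ≤ (1 + x) ^ n := one_add_mul_le_pow (by linarith) n
  have nx_nonneg : 0 ≤ n * x := by positivity
  have miss_nonneg : 0 ≤ (1 - x) ^ n := pow_nonneg (by linarith) n
  have product_le_one : (1 - x) ^ n * (1 + n * x) ≤ 1 := calc
    (1 - x) ^ n * (1 + n * x) ≤ (1 - x) ^ n * (1 + x) ^ n :=
      mul_le_mul_of_nonneg_left bernoulli miss_nonneg
    _ = (1 - x ^ 2) ^ n := by rw [← mul_pow]; ring
    _ ≤ 1 := pow_le_one₀ (by nlinarith) (by nlinarith)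
  rcases le_total 1 (n * x) with h | h
  · rw [min_eq_left h]
    nlinarith
  · rw [min_eq_right h]
    nlinarith

section Hit

variable {ι : Type*} {M : ℕ}

/-- The indicator function of the event that `i` occurs among `M` samples. -/
noncomputable def hit (M : ℕ) (i : ι) : (Fin M → ι) → ℝ :=
  Set.indicator {s | i ∈ Set.range s} 1

theorem hit_mul_self (M : ℕ) (i : ι) : hit M i * hit M i = hit M i := by
  ext s
  simp [hit, Set.indicator_apply]

theorem one_sub_hit [DecidableEq ι] (M : ℕ) (i : ι) :
    1 - hit M i = fun s ↦ ∏ a, if s a = i then (0 : ℝ) else 1 := by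
  ext s
  by_cases hs : ∃ a, s a = i
  · obtain ⟨a, rfl⟩ := hs
    simp [hit, prod_eq_zero (mem_univ a)]
  · have hs' : ∀ a, s a ≠ i := not_exists.mp hs
    simp [hit, hs']

variable [Fintype ι]

/-- The total `w`-weight of the set of elements that occur among `M` samples, counted without
multiplicity, as a function of the samples. -/
noncomputable def observedMass (M : ℕ) (w : ι → ℝ) : (Fin M → ι) → ℝ :=
  ∑ i, w i • hit M i

theorem observedMass_apply [DecidableEq ι] (w : ι → ℝ) (s : Fin M → ι) :
    observedMass M w s = ∑ i ∈ univ.image s, w i := by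
  have mem_range_iff (i : ι) : s ∈ {s : Fin M → ι | i ∈ Set.range s} ↔ i ∈ univ.image s := by simp
  simp only [observedMass, hit, Finset.sum_apply, Pi.smul_apply, Set.indicator_apply, mem_range_iff,
    Pi.one_apply, smul_eq_mul, mul_ite, mul_one, mul_zero, sum_ite_mem, univ_inter]

theorem observedMass_mono {w v : ι → ℝ} (hwv : ∀ i, w i ≤ v i) (s : Fin M → ι) :
    observedMass M w s ≤ observedMass M v s := by
  classical
  simpa only [observedMass_apply] using sum_le_sum fun i _ ↦ hwv i

variable {p : ι → ℝ}

theorem sampleExpectation_hit (hpsum : ∑ i, p i = 1) (i : ι) :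
    sampleExpectation p (hit M i) = 1 - (1 - p i) ^ M := by
  classical
  have miss : ∑ x, p x * (if x = i then 0 else 1) = 1 - p i := by
    simp [sum_ite, filter_ne', sum_erase_eq_sub, hpsum]
  have h := sampleExpectation_prod (M := M) p fun x ↦ if x = i then 0 else 1
  rw [← one_sub_hit, miss, map_sub, sampleExpectation_one hpsum] at h
  linarith

theorem sampleExpectation_observedMass (p w : ι → ℝ) :
    sampleExpectation p (observedMass M w) = ∑ i, w i * sampleExpectation p (hit M i) := by
  simp only [observedMass, map_sum, map_smul, smul_eq_mul]

theorem sampleExpectation_hit_nonneg (hp : ∀ i, 0 ≤ p i) (i : ι) :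
    0 ≤ sampleExpectation p (hit M i) := by
  have hit_nonneg : 0 ≤ hit M i := Set.indicator_nonneg fun _ _ ↦ zero_le_one
  simpa using sampleExpectation_mono hp hit_nonneg

theorem sampleExpectation_hit_mul_hit (hpsum : ∑ i, p i = 1) {i j : ι} (hij : i ≠ j) :
    sampleExpectation p (hit M i * hit M j) =
      1 - (1 - p i) ^ M - (1 - p j) ^ M + (1 - p i - p j) ^ M := by
  classical
  have miss_both : ∑ x, p x * ((if x = i then 0 else 1) * (if x = j then 0 else 1)) =
      1 - p i - p j := by
    have split (x : ι) : p x * ((if x = i then 0 else 1) * (if x = j then 0 else 1)) =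
        p x - (if x = i then p x else 0) - (if x = j then p x else 0) := by
      grind
    simp only [split, sum_sub_distrib, sum_ite_eq', mem_univ, if_true, hpsum]
  have h := sampleExpectation_prod (M := M) p
    fun x ↦ (if x = i then 0 else 1) * (if x = j then 0 else 1)
  have product : (1 - hit M i) * (1 - hit M j) = fun s : Fin M → ι ↦
      ∏ a, (if s a = i then (0 : ℝ) else 1) * (if s a = j then 0 else 1) := by
    simp only [one_sub_hit, prod_mul_distrib, Pi.mul_def]
  have expand : (1 - hit M i) * (1 - hit M j) = 1 - hit M i - hit M j + hit M i * hit M j := by ring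
  rw [← product, expand, miss_both, map_add, map_sub, map_sub, sampleExpectation_one hpsum,
    sampleExpectation_hit hpsum, sampleExpectation_hit hpsum] at h
  linarith

theorem sampleExpectation_hit_mul_hit_le (hp : ∀ i, 0 ≤ p i) (hpsum : ∑ i, p i = 1) {i j : ι}
    (hij : i ≠ j) :
    sampleExpectation p (hit M i * hit M j) ≤
      sampleExpectation p (hit M i) * sampleExpectation p (hit M j) := by
  have pair_le_one : p i + p j ≤ 1 :=
    hpsum ▸ add_le_sum (fun k _ ↦ hp k) (mem_univ i) (mem_univ j) hij
  have miss_both_le : (1 - p i - p j) ^ M ≤ (1 - p i) ^ M * (1 - p j) ^ M := by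
    rw [← mul_pow]
    exact pow_le_pow_left₀ (by linarith) (by nlinarith [mul_nonneg (hp i) (hp j)]) M
  rw [sampleExpectation_hit_mul_hit hpsum hij, sampleExpectation_hit hpsum,
    sampleExpectation_hit hpsum]
  linarith

theorem sampleVariance_observedMass_le (hp : ∀ i, 0 ≤ p i) (hpsum : ∑ i, p i = 1) {w : ι → ℝ}
    {t : ℝ} (hw : ∀ i, 0 ≤ w i) (hwt : ∀ i, w i ≤ t) :
    sampleVariance p (observedMass M w) ≤ t * sampleExpectation p (observedMass M w) := by
  let μ (i : ι) : ℝ := sampleExpectation p (hit M i)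
  have μ_nonneg (i : ι) : 0 ≤ μ i := sampleExpectation_hit_nonneg hp i
  have mean : sampleExpectation p (observedMass M w) = ∑ i, w i * μ i :=
    sampleExpectation_observedMass p w
  have second_moment : sampleExpectation p (observedMass M w * observedMass M w) =
      ∑ i, ∑ j, w i * w j * sampleExpectation p (hit M i * hit M j) := by
    simp only [observedMass, sum_mul_sum, smul_mul_smul_comm, map_sum, map_smul, smul_eq_mul]
  have covariance_le (i j : ι) :
      sampleExpectation p (hit M i * hit M j) - μ i * μ j ≤ if i = j then μ i else 0 := by
    split_ifs with hij
    · subst hij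
      rw [hit_mul_self]
      linarith [mul_self_nonneg (μ i)]
    · exact sub_nonpos.mpr (sampleExpectation_hit_mul_hit_le hp hpsum hij)
  rw [sampleVariance_eq_sub hpsum, second_moment, mean]
  calc
    _ = ∑ i, ∑ j, w i * w j * (sampleExpectation p (hit M i * hit M j) - μ i * μ j) := by
      simp only [sq, sum_mul_sum, mul_sub, sum_sub_distrib, mul_mul_mul_comm]
    _ ≤ ∑ i, ∑ j, w i * w j * if i = j then μ i else 0 := by
      gcongr with i _ j _
      · exact mul_nonneg (hw i) (hw j)
      · exact covariance_le i j
    _ = ∑ i, w i * (w i * μ i) := by simp [mul_assoc]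
    _ ≤ t * ∑ i, w i * μ i := by
      rw [mul_sum]
      gcongr with i
      · exact mul_nonneg (hw i) (μ_nonneg i)
      · exact hwt i

theorem min_one_mul_div_two_le_sampleExpectation_hit (hp : ∀ i, 0 ≤ p i) (hpsum : ∑ i, p i = 1)
    (i : ι) : min 1 (M * p i) / 2 ≤ sampleExpectation p (hit M i) := by
  rw [sampleExpectation_hit hpsum]
  exact min_one_mul_div_two_le_one_sub_one_sub_pow (hp i)
    (hpsum ▸ single_le_sum (fun j _ ↦ hp j) (mem_univ i)) M

end Hit

section Overlap

theorem sum_min_eq_sum_add_sum_sub_sum_abs_sub_div_two {ι : Type*} (s : Finset ι) (p q : ι → ℝ) :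
    ∑ i ∈ s, min (p i) (q i) =
      (∑ i ∈ s, p i + ∑ i ∈ s, q i - ∑ i ∈ s, |p i - q i|) / 2 := by
  have min_eq (i : ι) : min (p i) (q i) = (p i + q i - |p i - q i|) / 2 := by
    have := inf_eq_half_smul_add_sub_abs_sub' ℝ (p i) (q i)
    rwa [abs_sub_comm, smul_eq_mul, inv_mul_eq_div] at this
  simp only [min_eq, ← sum_div, sum_add_distrib, sum_sub_distrib]

-- Each of the products `x * 1`, `x * (m * x)` and `t * (m * x)` dominates `x * (m * δ)`; only
-- `t * 1` need not, and `hlight` excludes it.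
theorem sub_mul_le_min_mul_min {x t δ m : ℝ} (hx : 0 ≤ x) (hm : 0 ≤ m) (hδ : 0 ≤ δ) (hδt : δ ≤ t)
    (hmδ : m * δ ≤ 1) (hlight : t ≤ x → m * x ≤ 1) :
    (x - δ) * (m * δ) ≤ min x t * min 1 (m * x) := by
  have hmδ₀ : 0 ≤ m * δ := by positivity
  have hmx : 0 ≤ m * x := by positivity
  rcases le_total x δ with hxδ | hδx
  · exact (mul_nonpos_of_nonpos_of_nonneg (by linarith) hmδ₀).trans
      (mul_nonneg (le_min hx (hδ.trans hδt)) (le_min zero_le_one hmx))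
  · refine (mul_le_mul_of_nonneg_right (sub_le_self x hδ) hmδ₀).trans ?_
    rcases le_or_gt t x with htx | hxt
    · rw [min_eq_right htx, min_eq_right (hlight htx)]
      calc x * (m * δ) = δ * (m * x) := by ring
        _ ≤ t * (m * x) := by gcongr
    · rw [min_eq_left hxt.le]
      exact mul_le_mul_of_nonneg_left (le_min hmδ (by gcongr)) hx

variable {ι : Type*} [Fintype ι] {M : ℕ} {p : ι → ℝ}

theorem half_le_sampleProbability_of_heavy (hp : ∀ i, 0 ≤ p i) (hpsum : ∑ i, p i = 1)
    {w : ι → ℝ} (hw : ∀ i, 0 ≤ w i) {t : ℝ} {i : ι} (hti : t ≤ w i) (hi : 1 ≤ M * p i) :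
    1 / 2 ≤ sampleProbability p {s | t ≤ observedMass M w s} := by
  classical
  calc
    1 / 2 = min 1 (M * p i) / 2 := by rw [min_eq_left hi]
    _ ≤ sampleExpectation p (hit M i) := min_one_mul_div_two_le_sampleExpectation_hit hp hpsum i
    _ ≤ sampleProbability p {s | t ≤ observedMass M w s} := by
      refine sampleProbability_mono hp fun s hs ↦ ?_
      obtain ⟨a, rfl⟩ := hs
      rw [Set.mem_ofPred_eq, observedMass_apply]
      exact hti.trans (single_le_sum (fun j _ ↦ hw j) (mem_image_of_mem s (mem_univ a)))

theorem le_sampleExpectation_observedMass_min (hp : ∀ i, 0 ≤ p i) (hpsum : ∑ i, p i = 1)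
    {r : ι → ℝ} (hr : ∀ i, 0 ≤ r i) (hrp : ∀ i, r i ≤ p i) {t δ : ℝ} (hδ : 0 ≤ δ) (hδt : δ ≤ t)
    (hMδ : M * δ ≤ 1) (hlight : ∀ i, t ≤ r i → M * r i ≤ 1) :
    (∑ i, r i - Fintype.card ι * δ) * (M * δ) / 2 ≤
      sampleExpectation p (observedMass M fun i ↦ min (r i) t) := by
  have weight_nonneg (i : ι) : 0 ≤ min (r i) t := le_min (hr i) (hδ.trans hδt)
  rw [sampleExpectation_observedMass]
  calc
    (∑ i, r i - Fintype.card ι * δ) * (M * δ) / 2 = ∑ i, (r i - δ) * (M * δ) / 2 := by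
      simp [← sum_div, ← sum_mul]
    _ ≤ ∑ i, min (r i) t * sampleExpectation p (hit M i) := sum_le_sum fun i _ ↦ ?_
  calc
    (r i - δ) * (M * δ) / 2 ≤ min (r i) t * min 1 (M * r i) / 2 := by
      refine div_le_div_of_nonneg_right ?_ zero_le_two
      exact sub_mul_le_min_mul_min (hr i) M.cast_nonneg hδ hδt hMδ (hlight i)
    _ ≤ min (r i) t * (min 1 (M * p i) / 2) := by
      rw [mul_div_assoc]
      gcongr
      · exact weight_nonneg i
      · exact hrp i
    _ ≤ min (r i) t * sampleExpectation p (hit M i) :=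
      mul_le_mul_of_nonneg_left (min_one_mul_div_two_le_sampleExpectation_hit hp hpsum i)
        (weight_nonneg i)

theorem half_le_sampleProbability_of_light (hp : ∀ i, 0 ≤ p i) (hpsum : ∑ i, p i = 1)
    {r : ι → ℝ} (hr : ∀ i, 0 ≤ r i) (hrp : ∀ i, r i ≤ p i) {t δ : ℝ} (hδ : 0 < δ) (hδt : δ ≤ t)
    (hMδ : M * δ ≤ 1) (hlight : ∀ i, t ≤ r i → M * r i ≤ 1)
    (ht : 8 * t ≤ (∑ i, r i - Fintype.card ι * δ) * (M * δ)) :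
    1 / 2 ≤ sampleProbability p {s | t ≤ observedMass M r s} := by
  have t_pos : 0 < t := hδ.trans_le hδt
  let w (i : ι) : ℝ := min (r i) t
  have mean : 4 * t ≤ sampleExpectation p (observedMass M w) := by
    linarith [le_sampleExpectation_observedMass_min hp hpsum hr hrp hδ.le hδt hMδ hlight]
  have variance : sampleVariance p (observedMass M w) ≤
      t * sampleExpectation p (observedMass M w) :=
    sampleVariance_observedMass_le hp hpsum (fun i ↦ le_min (hr i) t_pos.le)
      fun i ↦ min_le_right _ _
  calc
    1 / 2 ≤ sampleProbability p {s | t ≤ observedMass M w s} :=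
      half_le_sampleProbability_of_variance_le hp hpsum t_pos mean variance
    _ ≤ sampleProbability p {s | t ≤ observedMass M r s} :=
      sampleProbability_mono hp fun s hs ↦
        hs.trans (observedMass_mono (fun i ↦ min_le_left _ _) s)

theorem collision_probability_lower_bound_general [DecidableEq ι] {p q : ι → ℝ} {θ : ℝ}
    (hp : ∀ i, 0 ≤ p i) (hpsum : ∑ i, p i = 1) (hq : ∀ i, 0 ≤ q i)
    (hθ : θ ≤ ∑ i, min (p i) (q i)) (hθM : 16 ≤ θ * M) (hMN : θ * M ≤ 2 * Fintype.card ι) :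
    1 / 2 ≤ sampleProbability p {s : Fin M → ι |
      θ ^ 2 * M / (32 * Fintype.card ι) ≤ ∑ i ∈ univ.image s, q i} := by
  have N_pos : (0 : ℝ) < Fintype.card ι := by linarith
  have θ_pos : 0 < θ := pos_of_mul_pos_left (by linarith : 0 < θ * M) M.cast_nonneg
  let r (i : ι) : ℝ := min (p i) (q i)
  have hr (i : ι) : 0 ≤ r i := le_min (hp i) (hq i)
  have hrp (i : ι) : r i ≤ p i := min_le_left _ _
  set N : ℝ := (Fintype.card ι : ℝ)
  set t : ℝ := θ ^ 2 * M / (32 * N) with ht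
  suffices 1 / 2 ≤ sampleProbability p {s | t ≤ observedMass M r s} by
    simp only [← observedMass_apply]
    exact this.trans (sampleProbability_mono hp fun s hs ↦
      hs.trans (observedMass_mono (fun i ↦ min_le_right _ _) s))
  by_cases heavy : ∃ i, t ≤ r i ∧ 1 ≤ M * r i
  · obtain ⟨i, hti, hMi⟩ := heavy
    exact half_le_sampleProbability_of_heavy hp hpsum hr hti
      (hMi.trans (mul_le_mul_of_nonneg_left (hrp i) M.cast_nonneg))
  · push Not at heavy
    have δ_le_t : θ / (2 * N) ≤ t := calc
      θ / (2 * N) = θ * 16 / (32 * N) := by field_simp; norm_num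
      _ ≤ θ * (θ * M) / (32 * N) := by gcongr
      _ = t := by rw [ht]; ring
    have Mδ_le_one : M * (θ / (2 * N)) ≤ 1 := by
      rw [← mul_div_assoc, div_le_one (by positivity)]
      linarith
    have eight_t_le : 8 * t ≤ (∑ i, r i - N * (θ / (2 * N))) * (M * (θ / (2 * N))) := calc
      8 * t = (θ - N * (θ / (2 * N))) * (M * (θ / (2 * N))) := by
        rw [ht]
        field_simp
        ring
      _ ≤ _ := by gcongr
    exact half_le_sampleProbability_of_light hp hpsum hr hrp (by positivity) δ_le_t Mδ_le_one
      (fun i hti ↦ (heavy i hti).le) eight_t_le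

end Overlap

/-- Collision-probability lemma for testing Orthogonality: if `‖p − q‖₁ ≤ 2 − ε`
and `2⁹/ε² ≤ M ≤ N`, then the set `A` of elements appearing among `M` independent
samples from `p` satisfies `q_A ≥ ε³M/(2¹¹N)` with probability at least `1/2`. -/
theorem collision_probability_lower_bound
    (N M : ℕ) (ε : ℝ) (hε : 0 < ε) (hε2 : ε ≤ 2)
    (hN : 0 < N) (hM : 0 < M) (hMN : M ≤ N)
    (hMε : (2 : ℝ) ^ 9 / ε ^ 2 ≤ (M : ℝ))
    (p q : Fin N → ℝ)
    (hp : ∀ i, 0 ≤ p i) (hpsum : ∑ i, p i = 1)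
    (hq : ∀ i, 0 ≤ q i) (hqsum : ∑ i, q i = 1)
    (hdist : ∑ i, |p i - q i| ≤ 2 - ε) :
    (∑ s ∈ Finset.univ.filter (fun s : Fin M → Fin N =>
        ε ^ 3 * (M : ℝ) / (2 ^ 11 * (N : ℝ)) ≤ ∑ i ∈ Finset.image s Finset.univ, q i),
      ∏ a, p (s a)) ≥ 1 / 2 := by
  have ε_sq_mul_M : 2 ^ 9 ≤ M * ε ^ 2 := (div_le_iff₀ (by positivity)).mp hMε
  have many_samples : 16 ≤ ε / 2 * M := by nlinarith
  have few_samples : ε / 2 * M ≤ 2 * Fintype.card (Fin N) := by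
    have hMN' : (M : ℝ) ≤ N := mod_cast hMN
    rw [Fintype.card_fin]
    nlinarith
  have overlap : ε / 2 ≤ ∑ i, min (p i) (q i) := by
    rw [sum_min_eq_sum_add_sum_sub_sum_abs_sub_div_two]
    linarith
  have threshold_le : ε ^ 3 * M / (2 ^ 11 * N) ≤
      (ε / 2) ^ 2 * M / (32 * Fintype.card (Fin N)) := by
    have : ε ^ 2 * M * ε ≤ ε ^ 2 * M * 2 := by gcongr
    rw [Fintype.card_fin, div_le_div_iff₀ (by positivity) (by positivity)]
    nlinarith
  rw [ge_iff_le, ← sampleProbability_eq_sum_filter]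
  exact (collision_probability_lower_bound_general hp hpsum hq overlap many_samples
    few_samples).trans (sampleProbability_mono hp fun s hs ↦ threshold_le.trans hs)
end

section
/- Let N be an even positive integer, let H : Fin N → Fin (3N/2) be a two-to-one function, and let σ be any permutation of Fin N. Define probability distributions p, q on Fin (3N/2) by p w = (2/N)·|{u ∈ Fin N : u is odd and H(σ u) = w}| and q w = (2/N)·|{u ∈ Fin N : u is even and H(σ u) = w}|. Let ℳ_σ be the set of unordered pairs {u,v} of distinct elements of Fin N with H(σ u) = H(σ v) (ℳ_σ is a perfect matching of Fin N since H is two-to-one). Then ‖p − q‖₁ = 2 − (4/N)·#{ {u,v} ∈ ℳ_σ : u and v have different parity }. -/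
open scoped Classical

/-!
If a fibre of `f` has at most two elements, of which `a` satisfy a predicate `P` and `b` do not,
then `|a - b| = a + b - 2 * a * b`. Summing over all fibres, the terms `a + b` count the whole
domain, while the products `a * b` count the pairs in a common fibre that are separated by `P`.
-/

section PairCounting

variable {α β γ : Type*}

theorem abs_natCast_sub_natCast_of_add_le_two {a b : ℕ} (h : a + b ≤ 2) :
    |(a : ℝ) - b| = (a + b : ℕ) - 2 * (a * b : ℕ) := by
  have ha : a ≤ 2 := by lia
  have hb : b ≤ 2 := by lia
  interval_cases a <;> interval_cases b <;> first | lia | norm_num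

theorem card_filter_and_add_card_filter_not_and [Fintype α] (P Q : α → Prop) [DecidablePred P]
    [DecidablePred Q] :
    (Finset.univ.filter fun u => P u ∧ Q u).card + (Finset.univ.filter fun u => ¬P u ∧ Q u).card =
      (Finset.univ.filter Q).card := by
  simpa only [Finset.filter_filter, and_comm] using
    Finset.card_filter_add_card_filter_not (s := Finset.univ.filter Q) P

theorem card_filter_comp_equiv [Fintype α] [Fintype γ] (e : α ≃ γ) (Q : γ → Prop)
    [DecidablePred Q] :
    (Finset.univ.filter fun u => Q (e u)).card = (Finset.univ.filter Q).card :=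
  Finset.card_equiv e fun u => by simp only [Finset.mem_filter_univ]

theorem card_filter_le_two_of_twoToOne [Fintype α] [DecidableEq β] {f : α → β}
    (hf : ∀ w, (∃ u, f u = w) → (Finset.univ.filter fun u => f u = w).card = 2) (w : β) :
    (Finset.univ.filter fun u => f u = w).card ≤ 2 := by
  by_cases hw : ∃ u, f u = w
  · exact (hf w hw).le
  · rw [Finset.filter_false_of_mem fun u _ hu => hw ⟨u, hu⟩, Finset.card_empty]
    exact Nat.zero_le 2

theorem sum_card_filter_mul_card_filter_eq_card_filter_product [Fintype β] [DecidableEq β]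
    (s : Finset α) (t : Finset γ) (f : α → β) (g : γ → β) :
    ∑ w, (s.filter fun u => f u = w).card * (t.filter fun v => g v = w).card =
      ((s ×ˢ t).filter fun uv => f uv.1 = g uv.2).card := by
  rw [Finset.card_eq_sum_card_fiberwise (f := fun uv => f uv.1) (t := Finset.univ)
    (fun _ _ => Finset.mem_coe.2 (Finset.mem_univ _))]
  refine Finset.sum_congr rfl fun w _ => ?_
  rw [← Finset.card_product]
  congr 1
  ext ⟨u, v⟩
  simp only [Finset.mem_product, Finset.mem_filter]
  grind

theorem card_filter_lt_and_not_iff [Fintype α] [LinearOrder α] (r : α → α → Prop)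
    [DecidableRel r] (hr : ∀ u v, r u v → r v u) (P : α → Prop) [DecidablePred P] :
    (Finset.univ.filter fun uv : α × α => uv.1 < uv.2 ∧ r uv.1 uv.2 ∧ ¬(P uv.1 ↔ P uv.2)).card =
      (Finset.univ.filter fun uv : α × α => (P uv.1 ∧ ¬P uv.2) ∧ r uv.1 uv.2).card := by
  refine Finset.card_nbij' (fun uv => if P uv.1 then uv else uv.swap)
    (fun uv => if uv.1 < uv.2 then uv else uv.swap) ?_ ?_ ?_ ?_ <;>
  · rintro ⟨u, v⟩ h
    simp only [Finset.coe_filter_univ, Set.mem_ofPred_eq] at h ⊢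
    grind

variable [Fintype α] [LinearOrder α] [Fintype β] [DecidableEq β] (f : α → β)
  (P : α → Prop) [DecidablePred P]

theorem sum_card_filter_mul_card_filter_not :
    ∑ w, (Finset.univ.filter fun u => P u ∧ f u = w).card *
        (Finset.univ.filter fun u => ¬P u ∧ f u = w).card =
      (Finset.univ.filter fun uv : α × α =>
        uv.1 < uv.2 ∧ f uv.1 = f uv.2 ∧ ¬(P uv.1 ↔ P uv.2)).card := by
  rw [card_filter_lt_and_not_iff (fun u v => f u = f v) (fun _ _ => Eq.symm),
    ← Finset.filter_filter, ← Finset.univ_product_univ, Finset.filter_product P (fun v => ¬P v),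
    ← sum_card_filter_mul_card_filter_eq_card_filter_product]
  simp only [Finset.filter_filter]

theorem sum_abs_card_filter_sub_card_filter_not
    (hf : ∀ w, (Finset.univ.filter fun u => f u = w).card ≤ 2) :
    ∑ w, |((Finset.univ.filter fun u => P u ∧ f u = w).card : ℝ) -
        (Finset.univ.filter fun u => ¬P u ∧ f u = w).card| =
      Fintype.card α - 2 * ((Finset.univ.filter fun uv : α × α =>
        uv.1 < uv.2 ∧ f uv.1 = f uv.2 ∧ ¬(P uv.1 ↔ P uv.2)).card : ℝ) := by
  have hsplit w := card_filter_and_add_card_filter_not_and P (fun u => f u = w)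
  have hcard : ∑ w, (Finset.univ.filter fun u => f u = w).card = Fintype.card α :=
    (Finset.card_eq_sum_card_fiberwise fun _ _ => Finset.mem_coe.2 (Finset.mem_univ _)).symm
  simp only [abs_natCast_sub_natCast_of_add_le_two ((hsplit _).trans_le (hf _)), hsplit,
    Finset.sum_sub_distrib, ← Finset.mul_sum, ← Nat.cast_sum, hcard,
    sum_card_filter_mul_card_filter_not]

theorem distance_via_matching_parity_general [Nonempty α]
    (hf : ∀ w, (Finset.univ.filter fun u => f u = w).card ≤ 2) (p q : β → ℝ)
    (hp : ∀ w, p w = 2 / (Fintype.card α : ℝ) *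
      ((Finset.univ.filter fun u => P u ∧ f u = w).card : ℝ))
    (hq : ∀ w, q w = 2 / (Fintype.card α : ℝ) *
      ((Finset.univ.filter fun u => ¬P u ∧ f u = w).card : ℝ)) :
    ∑ w, |p w - q w| = 2 - 4 / (Fintype.card α : ℝ) *
      ((Finset.univ.filter fun uv : α × α =>
        uv.1 < uv.2 ∧ f uv.1 = f uv.2 ∧ ¬(P uv.1 ↔ P uv.2)).card : ℝ) := by
  have hscale : (0 : ℝ) ≤ 2 / Fintype.card α := by positivity
  have hcard : (Fintype.card α : ℝ) ≠ 0 := Nat.cast_ne_zero.2 Fintype.card_ne_zero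
  simp only [hp, hq, ← mul_sub, abs_mul, abs_of_nonneg hscale, ← Finset.mul_sum,
    sum_abs_card_filter_sub_card_filter_not f P hf]
  field_simp
  ring

end PairCounting

/-- For a two-to-one function `H : Fin N → Fin (3N/2)` and a permutation `σ` of
`Fin N`, the L1-distance between the distributions `p` and `q` (obtained by
pushing the uniform distributions on odd resp. even labels through `H ∘ σ`)
equals `2 − (4/N)` times the number of matched pairs of different parity. -/
theorem distance_via_matching_parity
    (N : ℕ) (hN : 0 < N) (hN2 : N % 2 = 0)
    (H : Fin N → Fin (3 * (N / 2)))
    (hH : ∀ w, (∃ u, H u = w) → (Finset.univ.filter (fun u => H u = w)).card = 2)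
    (σ : Equiv.Perm (Fin N))
    (p q : Fin (3 * (N / 2)) → ℝ)
    (hp : ∀ w, p w = (2 / (N : ℝ)) *
      ((Finset.univ.filter (fun u : Fin N => Odd (u : ℕ) ∧ H (σ u) = w)).card : ℝ))
    (hq : ∀ w, q w = (2 / (N : ℝ)) *
      ((Finset.univ.filter (fun u : Fin N => Even (u : ℕ) ∧ H (σ u) = w)).card : ℝ)) :
    ∑ w, |p w - q w| = 2 - (4 / (N : ℝ)) *
      ((Finset.univ.filter (fun uv : Fin N × Fin N =>
        (uv.1 : ℕ) < (uv.2 : ℕ) ∧ H (σ uv.1) = H (σ uv.2) ∧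
          ¬ (Odd (uv.1 : ℕ) ↔ Odd (uv.2 : ℕ)))).card : ℝ) := by
  have : Nonempty (Fin N) := ⟨⟨0, hN⟩⟩
  have hfib w := (card_filter_comp_equiv σ fun u => H u = w).trans_le
    (card_filter_le_two_of_twoToOne hH w)
  simpa only [Fintype.card_fin, Fin.lt_def] using
    distance_via_matching_parity_general (fun u => H (σ u)) (fun u : Fin N => Odd (u : ℕ)) hfib p q
      (by simpa only [Fintype.card_fin] using hp)
      (by simpa only [Fintype.card_fin, Nat.not_odd_iff_even] using hq)
end

section
/- There exists N₀ such that for every even integer N ≥ N₀ the following holds: for every perfect matching ℳ of Fin N (a partition of Fin N into N/2 unordered pairs) and a uniformly random permutation σ of Fin N, the random variable X = #{ {u,v} ∈ ℳ : σ(u) and σ(v) have different parity } satisfies Prob[ X < N/16 ] ≤ 1/2. -/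
open scoped Classical

/-!
Give a label the sign `1` or `-1` according to its parity and let `Z` be the sum over all `u` of
`sign (σ u) * sign (σ (m u))`; then `Z = N - 4 X`, so `X < θ N` with `θ < 1/4` forces `Z` to be at
least `(1 - 4 θ) N`, and it is enough to see that `Z` has second moment `O(N)`. Since the signs sum
to zero, averaging the value `σ d` at a new point `d` over all points not yet used shows that each
product of signs at `d` and at most three other points has expectation at most `3 / (N - 3)`, which
bounds all but the `2 N` diagonal terms of `Z ^ 2`.
-/

open Equiv Filter Finset Topology
open scoped BigOperators

section Expectation

variable {𝕜 α ι : Type*} [Field 𝕜] [LinearOrder 𝕜] [IsStrictOrderedRing 𝕜]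

lemma abs_mul_le_one {x y : 𝕜} (hx : |x| ≤ 1) (hy : |y| ≤ 1) : |x * y| ≤ 1 := by
  rw [abs_mul]
  exact mul_le_one₀ hx (abs_nonneg y) hy

variable [Fintype ι]

lemma card_filter_le_div_card_le_expect_div {f : ι → 𝕜} (hf : ∀ i, 0 ≤ f i) {t : 𝕜} (ht : 0 < t) :
    (#{i | t ≤ f i} : 𝕜) / Fintype.card ι ≤ (𝔼 i, f i) / t := by
  rw [Fintype.expect_eq_sum_div_card, div_right_comm]
  gcongr
  rw [le_div_iff₀ ht, ← nsmul_eq_mul]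
  calc #{i | t ≤ f i} • t ≤ ∑ i with t ≤ f i, f i :=
        card_nsmul_le_sum _ _ _ fun i hi ↦ (mem_filter.mp hi).2
    _ ≤ ∑ i, f i := sum_le_univ_sum_of_nonneg hf

lemma abs_expect_le_of_forall_abs_le [Nonempty ι] {f : ι → 𝕜} {c : 𝕜} (hf : ∀ i, |f i| ≤ c) :
    |𝔼 i, f i| ≤ c :=
  (abs_expect_le _ _).trans <| expect_le univ_nonempty fun i _ ↦ hf i

variable [Fintype α] [DecidableEq α] {s : α → 𝕜} {g : (α → α) → 𝕜} {C : Finset α}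

lemma expect_perm_mul_apply_eq (hg : DependsOn g C) {d w : α} (hd : d ∉ C) (hw : w ∉ C) :
    𝔼 σ : Perm α, g σ * s (σ w) = 𝔼 σ : Perm α, g σ * s (σ d) := by
  refine Fintype.expect_equiv (Equiv.mulRight (swap w d)) _ _ fun σ ↦ ?_
  have hgσ : g σ = g (σ * swap w d : Perm α) := hg fun i hi ↦ by
    rw [Perm.mul_apply, swap_apply_of_ne_of_ne (ne_of_mem_of_not_mem hi hw)
      (ne_of_mem_of_not_mem hi hd)]
  simp only [coe_mulRight, ← hgσ, Perm.mul_apply, swap_apply_right]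

lemma sum_expect_perm_mul_apply_eq_zero (hs : ∑ a, s a = 0) :
    ∑ w, 𝔼 σ : Perm α, g σ * s (σ w) = 0 := by
  rw [← expect_sum_comm]
  refine expect_eq_zero fun σ _ ↦ ?_
  rw [← mul_sum, Equiv.sum_comp σ s, hs, mul_zero]

lemma card_sub_card_mul_abs_expect_perm_le (hs : ∑ a, s a = 0) (hs₁ : ∀ a, |s a| ≤ 1)
    (hg : DependsOn g C) (hg₁ : ∀ τ, |g τ| ≤ 1) {d : α} (hd : d ∉ C) :
    ((Fintype.card α : 𝕜) - #C) * |𝔼 σ : Perm α, g σ * s (σ d)| ≤ #C := by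
  set T : α → 𝕜 := fun w ↦ 𝔼 σ : Perm α, g σ * s (σ w)
  have sum_compl : ∑ w ∈ Cᶜ, T w = (Fintype.card α - #C) * T d := by
    rw [sum_eq_card_nsmul fun w hw ↦ expect_perm_mul_apply_eq hg hd (mem_compl.mp hw),
      nsmul_eq_mul, card_compl, Nat.cast_sub (card_le_univ C)]
  have sum_all : ∑ w ∈ C, T w + ∑ w ∈ Cᶜ, T w = 0 :=
    (sum_add_sum_compl C T).trans (sum_expect_perm_mul_apply_eq_zero hs)
  have abs_T_le (w : α) : |T w| ≤ 1 :=
    abs_expect_le_of_forall_abs_le fun σ ↦ abs_mul_le_one (hg₁ σ) (hs₁ _)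
  have card_le : (#C : 𝕜) ≤ Fintype.card α := mod_cast card_le_univ C
  calc (Fintype.card α - #C) * |T d| = |∑ w ∈ C, T w| := by
        rw [eq_neg_of_add_eq_zero_left sum_all, sum_compl, abs_neg, abs_mul,
          abs_of_nonneg (sub_nonneg.mpr card_le)]
    _ ≤ ∑ w ∈ C, |T w| := abs_sum_le_sum_abs _ _
    _ ≤ #C := by simpa using sum_le_card_nsmul C _ 1 fun w _ ↦ abs_T_le w

lemma expect_perm_four_le (hs : ∑ a, s a = 0) (hs₁ : ∀ a, |s a| ≤ 1) (hα : 3 < Fintype.card α)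
    {a b c d : α} (hda : d ≠ a) (hdb : d ≠ b) (hdc : d ≠ c) :
    𝔼 σ : Perm α, s (σ a) * s (σ b) * (s (σ c) * s (σ d)) ≤ 3 / (Fintype.card α - 3) := by
  have hα' : (0 : 𝕜) < Fintype.card α - 3 := sub_pos.mpr (mod_cast hα)
  have card_le : (#{a, b, c} : 𝕜) ≤ 3 := mod_cast card_le_three
  have hg : DependsOn (fun τ : α → α ↦ s (τ a) * s (τ b) * s (τ c)) ({a, b, c} : Finset α) :=
    fun x y h ↦ by simp [h a, h b, h c]
  have hg₁ (τ : α → α) : |s (τ a) * s (τ b) * s (τ c)| ≤ 1 :=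
    abs_mul_le_one (abs_mul_le_one (hs₁ _) (hs₁ _)) (hs₁ _)
  simp only [← mul_assoc]
  set E := 𝔼 σ : Perm α, s (σ a) * s (σ b) * s (σ c) * s (σ d)
  rw [le_div_iff₀' hα']
  calc (Fintype.card α - 3) * E ≤ (Fintype.card α - 3) * |E| := by gcongr; exact le_abs_self E
    _ ≤ (Fintype.card α - #{a, b, c}) * |E| := by gcongr
    _ ≤ #{a, b, c} :=
        card_sub_card_mul_abs_expect_perm_le hs hs₁ hg hg₁ (by simp [hda, hdb, hdc])
    _ ≤ 3 := card_le

lemma expect_sq_sum_mul_apply_le (hs : ∑ a, s a = 0) (hs₁ : ∀ a, |s a| ≤ 1)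
    (hα : 3 < Fintype.card α) {m : Perm α} (hm : ∀ u, m u ≠ u) :
    𝔼 σ : Perm α, (∑ u, s (σ u) * s (σ (m u))) ^ 2 ≤
      Fintype.card α * (Fintype.card α * (3 / (Fintype.card α - 3)) + 2) := by
  set ε : 𝕜 := 3 / (Fintype.card α - 3)
  have hε : 0 ≤ ε := div_nonneg zero_le_three (sub_nonneg.mpr (mod_cast hα.le))
  have term_le (u w : α) : 𝔼 σ : Perm α, s (σ u) * s (σ (m u)) * (s (σ w) * s (σ (m w))) ≤
      ε + (if u = w then 1 else 0) + (if u = m w then 1 else 0) := by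
    by_cases hu : u = w ∨ u = m w
    · have le_one := (le_abs_self _).trans <| abs_expect_le_of_forall_abs_le fun σ : Perm α ↦
        abs_mul_le_one (abs_mul_le_one (hs₁ (σ u)) (hs₁ (σ (m u))))
          (abs_mul_le_one (hs₁ (σ w)) (hs₁ (σ (m w))))
      refine le_one.trans ?_
      rcases hu with hu | hu <;> rw [if_pos hu] <;> split_ifs <;> linarith
    · obtain ⟨huw, humw⟩ := not_or.mp hu
      simpa [huw, humw] using
        expect_perm_four_le hs hs₁ hα (Ne.symm humw) (m.injective.ne (Ne.symm huw)) (hm w)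
  calc 𝔼 σ : Perm α, (∑ u, s (σ u) * s (σ (m u))) ^ 2
      = ∑ w, ∑ u, 𝔼 σ : Perm α, s (σ u) * s (σ (m u)) * (s (σ w) * s (σ (m w))) := by
        simp only [sq, sum_mul_sum, expect_sum_comm]
        exact sum_comm
    _ ≤ ∑ w, ∑ u, (ε + (if u = w then 1 else 0) + (if u = m w then 1 else 0)) :=
        sum_le_sum fun w _ ↦ sum_le_sum fun u _ ↦ term_le u w
    _ = Fintype.card α * (Fintype.card α * ε + 2) := by
        simp only [sum_add_distrib, sum_const, card_univ, nsmul_eq_mul, sum_ite_eq', mem_univ,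
          if_true, mul_one]
        ring

end Expectation

section DiscordantPairs

variable {α : Type*} (p : α → Prop) [DecidablePred p]

/-- The sign `±1` of a label under the two-colouring of the labels given by `p`. -/
def colourSign (a : α) : ℝ := if p a then 1 else -1

lemma abs_colourSign_le_one (a : α) : |colourSign p a| ≤ 1 := by
  unfold colourSign
  split_ifs <;> simp

lemma colourSign_mul_colourSign (a b : α) :
    colourSign p a * colourSign p b = 1 - 2 * if ¬(p a ↔ p b) then 1 else 0 := by
  by_cases ha : p a <;> by_cases hb : p b <;> norm_num [colourSign, ha, hb]

variable [Fintype α]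

lemma sum_colourSign_eq_zero (hp : #{a | p a} = #{a | ¬p a}) : ∑ a, colourSign p a = 0 := by
  simp [colourSign, sum_ite, hp]

variable [LinearOrder α]

/-- The pairs of the perfect matching `m` (a fixed-point-free involution) whose two elements are
coloured differently by `p`, each pair being listed once, in increasing order. -/
def discordantPairs (m : Perm α) : Finset (α × α) :=
  {uv | uv.1 < uv.2 ∧ m uv.1 = uv.2 ∧ ¬(p uv.1 ↔ p uv.2)}

variable {m : Perm α}

lemma card_filter_not_iff_apply (hm : Function.Involutive m) :
    #{u | ¬(p u ↔ p (m u))} = 2 * #(discordantPairs p m) := by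
  set D : Finset α := {u | ¬(p u ↔ p (m u))} with hD
  have mem_D (u : α) : u ∈ D ↔ ¬(p u ↔ p (m u)) := by simp [hD]
  have ne_of_mem {u : α} (hu : u ∈ D) : m u ≠ u := fun h ↦ by simp [mem_D, h] at hu
  have card_lt : #{u ∈ D | u < m u} = #(discordantPairs p m) := by
    refine card_nbij' (fun u ↦ (u, m u)) Prod.fst ?_ ?_ ?_ ?_ <;>
      simp +contextual [Set.MapsTo, Set.LeftInvOn, discordantPairs, mem_D, and_comm]
  have card_not_lt : #{u ∈ D | ¬u < m u} = #{u ∈ D | u < m u} := by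
    refine card_equiv m fun u ↦ ?_
    simp only [mem_filter, mem_D, hm u]
    grind
  rw [← card_filter_add_card_filter_not (s := D) (fun u ↦ u < m u), card_not_lt, card_lt, two_mul]

lemma sum_colourSign_mul_colourSign_apply (hm : Function.Involutive m) :
    ∑ u, colourSign p u * colourSign p (m u) = Fintype.card α - 4 * #(discordantPairs p m) := by
  simp only [colourSign_mul_colourSign, sum_sub_distrib, ← mul_sum, sum_boole,
    card_filter_not_iff_apply p hm, sum_const, card_univ, nsmul_eq_mul, mul_one]
  push_cast
  ring

lemma card_perm_discordantPairs_lt_div_le (hp : #{a | p a} = #{a | ¬p a})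
    (hm : Function.Involutive m) (hm' : ∀ u, m u ≠ u) (hα : 3 < Fintype.card α)
    {θ : ℝ} (hθ : θ < 1 / 4) :
    (#{σ : Perm α | (#(discordantPairs (fun u ↦ p (σ u)) m) : ℝ) < θ * Fintype.card α} : ℝ) /
        Fintype.card (Perm α) ≤
      (3 / (Fintype.card α - 3) + 2 / Fintype.card α) / (1 - 4 * θ) ^ 2 := by
  have hN : (0 : ℝ) < Fintype.card α := Nat.cast_pos.mpr (by omega)
  have ht : 0 < (1 - 4 * θ) * Fintype.card α := mul_pos (by linarith) hN
  have second_moment_le := expect_sq_sum_mul_apply_le (sum_colourSign_eq_zero p hp)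
    (abs_colourSign_le_one p) hα hm'
  set Z : Perm α → ℝ := fun σ ↦ ∑ u, colourSign p (σ u) * colourSign p (σ (m u))
  have Z_eq (σ : Perm α) :
      Z σ = Fintype.card α - 4 * #(discordantPairs (fun u ↦ p (σ u)) m) :=
    sum_colourSign_mul_colourSign_apply (fun u ↦ p (σ u)) hm
  have le_Z_sq (σ : Perm α)
      (hσ : (#(discordantPairs (fun u ↦ p (σ u)) m) : ℝ) < θ * Fintype.card α) :
      ((1 - 4 * θ) * Fintype.card α) ^ 2 ≤ Z σ ^ 2 := by
    gcongr
    linarith [Z_eq σ]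
  calc (#{σ : Perm α | (#(discordantPairs (fun u ↦ p (σ u)) m) : ℝ) < θ * Fintype.card α} : ℝ) /
        Fintype.card (Perm α)
      ≤ (#{σ | ((1 - 4 * θ) * Fintype.card α) ^ 2 ≤ Z σ ^ 2} : ℝ) / Fintype.card (Perm α) := by
        gcongr with σ
        exact le_Z_sq σ
    _ ≤ (𝔼 σ, Z σ ^ 2) / ((1 - 4 * θ) * Fintype.card α) ^ 2 :=
        card_filter_le_div_card_le_expect_div (fun σ ↦ sq_nonneg (Z σ)) (pow_pos ht 2)
    _ ≤ Fintype.card α * (Fintype.card α * (3 / (Fintype.card α - 3)) + 2) /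
          ((1 - 4 * θ) * Fintype.card α) ^ 2 := by gcongr
    _ = (3 / (Fintype.card α - 3) + 2 / Fintype.card α) / (1 - 4 * θ) ^ 2 := by
        rw [mul_pow, mul_comm ((1 - 4 * θ) ^ 2), ← div_div, sq (Fintype.card α : ℝ),
          mul_div_mul_left _ _ hN.ne', add_div, mul_div_cancel_left₀ _ hN.ne']

end DiscordantPairs

lemma tendsto_three_div_sub_three_add_two_div :
    Tendsto (fun N : ℕ ↦ (3 / (N - 3) + 2 / N : ℝ)) atTop (𝓝 0) := by
  have h := tendsto_atTop_add_const_right atTop (-3 : ℝ) tendsto_natCast_atTop_atTop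
  simpa [sub_eq_add_neg] using (h.const_div_atTop 3).add (tendsto_const_div_atTop_nhds_zero_nat 2)

theorem random_matching_parity_bound_general {θ δ : ℝ} (hθ : θ < 1 / 4) (hδ : 0 < δ) :
    ∃ N₀ : ℕ, ∀ (α : Type*) [Fintype α] [LinearOrder α], N₀ ≤ Fintype.card α →
      ∀ (p : α → Prop) [DecidablePred p], #{a | p a} = #{a | ¬p a} →
      ∀ m : Perm α, Function.Involutive m → (∀ u, m u ≠ u) →
      (#{σ : Perm α | (#(discordantPairs (fun u ↦ p (σ u)) m) : ℝ) < θ * Fintype.card α} : ℝ) /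
        Fintype.card (Perm α) ≤ δ := by
  have tendsto_bound := tendsto_three_div_sub_three_add_two_div.div_const ((1 - 4 * θ) ^ 2)
  rw [zero_div] at tendsto_bound
  obtain ⟨N₀, hN₀⟩ := eventually_atTop.mp <|
    (tendsto_bound.eventually_le_const hδ).and (eventually_gt_atTop 3)
  refine ⟨N₀, fun α _ _ hα p _ hp m hm hm' ↦ ?_⟩
  obtain ⟨bound_le, three_lt⟩ := hN₀ _ hα
  exact (card_perm_discordantPairs_lt_div_le p hp hm hm' three_lt hθ).trans bound_le

lemma card_odd_eq_card_not_odd_fin {N : ℕ} (hN : N % 2 = 0) :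
    #{a : Fin N | Odd (a : ℕ)} = #{a : Fin N | ¬Odd (a : ℕ)} :=
  card_equiv Fin.revPerm fun a ↦ by
    simp only [mem_filter_univ, Fin.revPerm_apply, Fin.val_rev]
    grind

/-- For a perfect matching of `Fin N` (encoded by a fixed-point-free involution
`m`) and a uniformly random permutation `σ`, the number of matched pairs whose
images under `σ` have different parity is less than `N/16` with probability at
most `1/2`, for all sufficiently large even `N`. -/
theorem random_matching_parity_bound :
    ∃ N₀ : ℕ, ∀ N : ℕ, N₀ ≤ N → N % 2 = 0 →
      ∀ m : Equiv.Perm (Fin N), (∀ u, m (m u) = u) → (∀ u, m u ≠ u) →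
      ((Finset.univ.filter (fun σ : Equiv.Perm (Fin N) =>
          (((Finset.univ.filter (fun uv : Fin N × Fin N =>
              (uv.1 : ℕ) < (uv.2 : ℕ) ∧ m uv.1 = uv.2 ∧
                ¬ (Odd ((σ uv.1 : Fin N) : ℕ) ↔ Odd ((σ uv.2 : Fin N) : ℕ)))).card : ℝ)
            < (N : ℝ) / 16))).card : ℝ)
        / (Fintype.card (Equiv.Perm (Fin N)) : ℝ) ≤ 1 / 2 := by
  obtain ⟨N₀, hN₀⟩ :=
    random_matching_parity_bound_general (θ := 1 / 16) (δ := 1 / 2) (by norm_num) (by norm_num)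
  refine ⟨N₀, fun N hN hpar m hinv hfix ↦ ?_⟩
  simpa [discordantPairs, div_eq_inv_mul] using
    hN₀ (Fin N) (by simpa using hN) (fun a ↦ Odd (a : ℕ)) (card_odd_eq_card_not_odd_fin hpar)
      m hinv hfix
end

section
/- There exists N₀ such that for every even integer N ≥ N₀ and every two-to-one function H : Fin N → Fin (3N/2) the following holds. For a uniformly random permutation σ of Fin N, define probability distributions p, q on Fin (3N/2) by p w = (2/N)·|{u ∈ Fin N : u is odd and H(σ u) = w}| and q w = (2/N)·|{u ∈ Fin N : u is even and H(σ u) = w}|. Then Prob[ ‖p − q‖₁ ≤ 7/4 ] ≥ 1/2. -/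
open scoped Classical

/-!
Weight the label `u` by `s u = (-1) ^ u`. A fibre `{a, b}` of `H` contributes
`(2 / N) * |s (σ⁻¹ a) + s (σ⁻¹ b)| = (2 / N) * (1 + s (σ⁻¹ a) * s (σ⁻¹ b))` to the distance, and
there are `N / 2` fibres, so the distance is `1 + (2 / N) * X` with `X` the sum of the products
`s (σ⁻¹ a) * s (σ⁻¹ b)` over the fibres. Distinct fibres are nearly uncorrelated: as `∑ s = 0` and
`s ^ 2 = 1`, the mixed moments of the signs at distinct points satisfy a recursion, by which the
moment at four points is `3 / ((N - 1) * (N - 3))`. Hence `𝔼 X ^ 2 ≤ N`, and Chebyshev's inequality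
concludes.
-/

section DistanceBound

open Finset Equiv
open scoped BigOperators

section PermMoment

variable {K α : Type*} [Field K] [CharZero K] [Fintype α] [DecidableEq α]

/-- The mixed moment of the values at the points of `T` of a uniformly random rearrangement `s ∘ σ`
of `s`. -/
def permMoment (s : α → K) (T : Finset α) : K :=
  𝔼 σ : Perm α, ∏ v ∈ T, s (σ v)

lemma permMoment_empty (s : α → K) : permMoment s ∅ = 1 := by
  simp [permMoment]

lemma permMoment_map (s : α → K) (T : Finset α) (τ : Perm α) :
    permMoment s (T.map τ.toEmbedding) = permMoment s T :=
  Fintype.expect_equiv (Equiv.mulRight τ) _ _ fun σ => by simp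

lemma permMoment_insert_eq_insert (s : α → K) {T : Finset α} {x y : α} (hx : x ∉ T) (hy : y ∉ T) :
    permMoment s (insert x T) = permMoment s (insert y T) := by
  have hT : T.map (swap x y).toEmbedding = T := by
    refine (map_eq_image _ _).trans <| (image_congr fun v hv => ?_).trans image_id
    exact swap_apply_of_ne_of_ne (ne_of_mem_of_not_mem hv hx) (ne_of_mem_of_not_mem hv hy)
  rw [← permMoment_map s (insert x T) (swap x y), map_insert, hT]
  simp

variable {s : α → K}

lemma sum_expect_mul_apply_eq_zero (hs₀ : ∑ u, s u = 0) (φ : Perm α → K) :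
    ∑ d, 𝔼 σ : Perm α, φ σ * s (σ d) = 0 := by
  rw [← expect_sum_comm]
  refine expect_eq_zero fun σ _ => ?_
  rw [← mul_sum, Equiv.sum_comp σ s, hs₀, mul_zero]

-- Expand `0 = 𝔼 (∏ v ∈ T, s (σ v)) * ∑ x, s (σ x)`: a summand with `x ∈ T` cancels a factor, and
-- all summands with `x ∉ T` are equal.
lemma permMoment_insert (hs : ∀ u, s u ^ 2 = 1) (hs₀ : ∑ u, s u = 0) {T : Finset α} {d : α}
    (hd : d ∉ T) :
    (Fintype.card α - #T : K) * permMoment s (insert d T) =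
      -∑ x ∈ T, permMoment s (T.erase x) := by
  have inside : ∀ x ∈ T,
      𝔼 σ : Perm α, (∏ v ∈ T, s (σ v)) * s (σ x) = permMoment s (T.erase x) := fun x hx =>
    expect_congr rfl fun σ _ => by rw [← prod_erase_mul T _ hx, mul_assoc, ← sq, hs, mul_one]
  have outside : ∀ x ∈ Tᶜ,
      𝔼 σ : Perm α, (∏ v ∈ T, s (σ v)) * s (σ x) = permMoment s (insert d T) := fun x hx => by
    rw [permMoment_insert_eq_insert s hd (mem_compl.mp hx)]
    exact expect_congr rfl fun σ _ => by rw [prod_insert (mem_compl.mp hx), mul_comm]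
  have total := sum_expect_mul_apply_eq_zero hs₀ fun σ => ∏ v ∈ T, s (σ v)
  rw [← sum_add_sum_compl T, sum_congr rfl inside, sum_congr rfl outside, sum_const, card_compl,
    nsmul_eq_mul, Nat.cast_sub (card_le_univ T)] at total
  exact eq_neg_of_add_eq_zero_right total

lemma permMoment_of_card_eq_two (hs : ∀ u, s u ^ 2 = 1) (hs₀ : ∑ u, s u = 0) {T : Finset α}
    (hT : #T = 2) : permMoment s T = -1 / (Fintype.card α - 1) := by
  have hcard : 2 ≤ Fintype.card α := hT ▸ card_le_univ T
  have hcard₁ : (Fintype.card α : K) - 1 ≠ 0 :=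
    sub_ne_zero.mpr <| by exact_mod_cast (show Fintype.card α ≠ 1 by lia)
  obtain ⟨a, b, hab, rfl⟩ := card_eq_two.mp hT
  have recursion := permMoment_insert hs hs₀ (notMem_singleton.mpr hab)
  rw [card_singleton, sum_singleton, erase_singleton, permMoment_empty, Nat.cast_one] at recursion
  rw [eq_div_iff hcard₁, mul_comm, recursion]

lemma permMoment_of_card_eq_four (hs : ∀ u, s u ^ 2 = 1) (hs₀ : ∑ u, s u = 0) {T : Finset α}
    (hT : #T = 4) :
    permMoment s T = 3 / ((Fintype.card α - 1) * (Fintype.card α - 3)) := by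
  have hcard : 4 ≤ Fintype.card α := hT ▸ card_le_univ T
  have hcard₁ : (Fintype.card α : K) - 1 ≠ 0 :=
    sub_ne_zero.mpr <| by exact_mod_cast (show Fintype.card α ≠ 1 by lia)
  have hcard₃ : (Fintype.card α : K) - 3 ≠ 0 :=
    sub_ne_zero.mpr <| by exact_mod_cast (show Fintype.card α ≠ 3 by lia)
  obtain ⟨d, T, hd, rfl, hT'⟩ := card_eq_succ.mp hT
  have recursion := permMoment_insert hs hs₀ hd
  rw [sum_congr rfl fun x hx =>
    permMoment_of_card_eq_two hs hs₀ (T := T.erase x) (by rw [card_erase_of_mem hx, hT']),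
    sum_const, hT', nsmul_eq_mul] at recursion
  push_cast at recursion
  field_simp at recursion ⊢
  linear_combination recursion

lemma expect_sq_sum_prod_of_card_eq_two (hs : ∀ u, s u ^ 2 = 1) (hs₀ : ∑ u, s u = 0) {ι : Type*}
    {I : Finset ι} {A : ι → Finset α} (hA : ∀ i ∈ I, #(A i) = 2)
    (hdisj : (I : Set ι).PairwiseDisjoint A) :
    𝔼 σ : Perm α, (∑ i ∈ I, ∏ v ∈ A i, s (σ v)) ^ 2 =
      #I + #I * (#I - 1) * (3 / ((Fintype.card α - 1) * (Fintype.card α - 3))) := by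
  set m : K := 3 / ((Fintype.card α - 1) * (Fintype.card α - 3))
  have correlation : ∀ i ∈ I, ∀ j ∈ I,
      𝔼 σ : Perm α, (∏ v ∈ A i, s (σ v)) * ∏ v ∈ A j, s (σ v) = if i = j then 1 else m := by
    intro i hi j hj
    split_ifs with hij
    · subst hij
      simp [← sq, ← prod_pow, hs]
    · have hd : Disjoint (A i) (A j) := hdisj hi hj hij
      simp_rw [← prod_union hd]
      exact permMoment_of_card_eq_four hs hs₀ (by rw [card_union_of_disjoint hd, hA i hi, hA j hj])
  calc 𝔼 σ : Perm α, (∑ i ∈ I, ∏ v ∈ A i, s (σ v)) ^ 2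
      = ∑ i ∈ I, ∑ j ∈ I, 𝔼 σ : Perm α, (∏ v ∈ A i, s (σ v)) * ∏ v ∈ A j, s (σ v) := by
        simp_rw [sq, sum_mul_sum, expect_sum_comm]
    _ = ∑ i ∈ I, ∑ j ∈ I, (m + if i = j then 1 - m else 0) :=
        sum_congr rfl fun i hi => sum_congr rfl fun j hj => by
          rw [correlation i hi j hj]; split_ifs <;> ring
    _ = #I + #I * (#I - 1) * m := by
        simp only [sum_add_distrib, sum_const, nsmul_eq_mul, sum_ite_eq, sum_ite_mem, inter_self]
        ring

lemma expect_sq_sum_prod_le {s : α → ℝ} (hs : ∀ u, s u ^ 2 = 1) (hs₀ : ∑ u, s u = 0) {ι : Type*}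
    {I : Finset ι} {A : ι → Finset α} (hA : ∀ i ∈ I, #(A i) = 2)
    (hdisj : (I : Set ι).PairwiseDisjoint A) :
    𝔼 σ : Perm α, (∑ i ∈ I, ∏ v ∈ A i, s (σ v)) ^ 2 ≤ 2 * #I := by
  rw [expect_sq_sum_prod_of_card_eq_two hs hs₀ hA hdisj]
  have hcard : #I * 2 ≤ Fintype.card α := by
    rw [← sum_const_nat hA, ← card_biUnion hdisj]
    exact card_le_univ _
  have hn : (#I * 2 : ℝ) ≤ Fintype.card α := by exact_mod_cast hcard
  rcases lt_or_ge #I 2 with hI | hI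
  · interval_cases #I <;> norm_num
  · have hI' : (2 : ℝ) ≤ #I := by exact_mod_cast hI
    have hoff : ((#I : ℝ) - 1) * (3 / ((Fintype.card α - 1) * (Fintype.card α - 3))) ≤ 1 := by
      rw [← mul_div_assoc, div_le_one (mul_pos (by linarith) (by linarith))]
      nlinarith
    nlinarith

end PermMoment

lemma one_sub_expect_sq_div_sq_le {ι : Type*} [Fintype ι] [Nonempty ι] (X : ι → ℝ) {t : ℝ}
    (ht : 0 < t) : 1 - (𝔼 i, X i ^ 2) / t ^ 2 ≤ (#{i | X i ≤ t} : ℝ) / Fintype.card ι := by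
  have hcard : (0 : ℝ) < Fintype.card ι := by exact_mod_cast Fintype.card_pos
  have pointwise : ∀ i, 1 - X i ^ 2 / t ^ 2 ≤ if X i ≤ t then 1 else 0 := fun i => by
    split_ifs with hi
    · exact sub_le_self 1 (by positivity)
    · rw [sub_nonpos, one_le_div (by positivity)]
      exact pow_le_pow_left₀ ht.le (not_le.mp hi).le 2
  have total : Fintype.card ι - (∑ i, X i ^ 2) / t ^ 2 ≤ (#{i | X i ≤ t} : ℝ) := by
    simpa [sum_sub_distrib, ← sum_div] using sum_le_sum fun i (_ : i ∈ univ) => pointwise i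
  rw [Fintype.expect_eq_sum_div_card, le_div_iff₀ hcard, div_right_comm, sub_mul, one_mul,
    div_mul_cancel₀ _ hcard.ne']
  exact total

section TwoToOne

variable {α β W : Type*} [Fintype α] [Fintype β] [DecidableEq W]

/-- The map `g` is two-to-one: every value it takes is taken exactly twice. As in the collision
problem, `g` need not be surjective. -/
def IsTwoToOne (g : α → W) : Prop :=
  ∀ w, (∃ u, g u = w) → #{u | g u = w} = 2

lemma IsTwoToOne.comp_equiv {g : α → W} (hg : IsTwoToOne g) (e : β ≃ α) : IsTwoToOne (g ∘ e) := by
  rintro w ⟨u, hu⟩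
  rw [← hg w ⟨e u, hu⟩]
  exact card_equiv e (by simp)

lemma IsTwoToOne.card_fiber {g : α → W} (hg : IsTwoToOne g) {w : W} (hw : w ∈ univ.image g) :
    #{u | g u = w} = 2 :=
  hg w (by simpa using hw)

lemma IsTwoToOne.two_mul_card_image {g : α → W} (hg : IsTwoToOne g) :
    2 * #(univ.image g) = Fintype.card α := by
  rw [← card_univ, card_eq_sum_card_image g, sum_const_nat fun w hw => hg.card_fiber hw, mul_comm]

lemma IsTwoToOne.even_card {g : α → W} (hg : IsTwoToOne g) : Even (Fintype.card α) :=
  hg.two_mul_card_image ▸ even_two_mul _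

lemma abs_add_eq_one_add_mul {R : Type*} [Ring R] [LinearOrder R] [IsStrictOrderedRing R] {x y : R}
    (hx : x ^ 2 = 1) (hy : y ^ 2 = 1) : |x + y| = 1 + x * y := by
  rcases sq_eq_one_iff.mp hx with rfl | rfl <;>
    rcases sq_eq_one_iff.mp hy with rfl | rfl <;> norm_num

lemma IsTwoToOne.sum_abs_sum_fiber [Fintype W] {g : α → W} (hg : IsTwoToOne g) {s : α → ℝ}
    (hs : ∀ u, s u ^ 2 = 1) :
    ∑ w, |∑ u with g u = w, s u| = #(univ.image g) + ∑ w ∈ univ.image g, ∏ u with g u = w, s u := by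
  have fiber : ∀ w ∈ univ.image g,
      |∑ u with g u = w, s u| = 1 + ∏ u with g u = w, s u := fun w hw => by
    obtain ⟨a, b, hab, hfib⟩ := card_eq_two.mp (hg.card_fiber hw)
    rw [hfib, sum_pair hab, prod_pair hab, abs_add_eq_one_add_mul (hs a) (hs b)]
  have off_image : ∀ w ∈ univ, w ∉ univ.image g → |∑ u with g u = w, s u| = 0 := fun w _ hw => by
    rw [filter_false_of_mem fun u _ (hu : g u = w) => hw (hu ▸ mem_image_of_mem g (mem_univ u)),
      sum_empty, abs_zero]
  rw [← sum_subset (subset_univ _) off_image, sum_congr rfl fiber, sum_add_distrib, sum_const,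
    nsmul_one]

end TwoToOne

section Labels

variable {N : ℕ} {W : Type*} [DecidableEq W]

/-- The sign `(-1) ^ u` of a label `u`, which tells odd and even labels apart. -/
def labelSign (u : Fin N) : ℝ := (-1) ^ (u : ℕ)

lemma labelSign_sq (u : Fin N) : labelSign u ^ 2 = 1 := by
  rw [labelSign, ← pow_mul, mul_comm, pow_mul, neg_one_sq, one_pow]

lemma sum_labelSign (hN : Even N) : ∑ u : Fin N, labelSign u = 0 := by
  simp_rw [labelSign, Fin.sum_univ_eq_sum_range fun i => (-1 : ℝ) ^ i, neg_one_geom_sum, if_pos hN]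

lemma IsTwoToOne.expect_sq_sum_prod_labelSign_le {H : Fin N → W} (hH : IsTwoToOne H) :
    𝔼 σ : Perm (Fin N), (∑ w ∈ univ.image H, ∏ v with H v = w, labelSign (σ v)) ^ 2 ≤ (N : ℝ) := by
  have hN : Even N := Fintype.card_fin N ▸ hH.even_card
  have hcard : (2 * #(univ.image H) : ℝ) = N := by
    exact_mod_cast hH.two_mul_card_image.trans (Fintype.card_fin N)
  rw [← hcard]
  exact expect_sq_sum_prod_le labelSign_sq (sum_labelSign hN) (fun w hw => hH.card_fiber hw)
    (Set.pairwiseDisjoint_filter H _ univ)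

lemma card_odd_sub_card_even (g : Fin N → W) (w : W) :
    (#{u : Fin N | Odd (u : ℕ) ∧ g u = w} : ℝ) - #{u : Fin N | Even (u : ℕ) ∧ g u = w} =
      -∑ u with g u = w, labelSign u := by
  simp_rw [card_filter, sum_filter, Nat.cast_sum, ← sum_sub_distrib, ← sum_neg_distrib]
  refine sum_congr rfl fun u _ => ?_
  rcases Nat.even_or_odd (u : ℕ) with hu | hu
  · simp [hu, labelSign, Nat.not_odd_iff_even.mpr hu, apply_ite]
  · simp [hu, labelSign, Nat.not_even_iff_odd.mpr hu, apply_ite]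

variable [Fintype W]

/-- The `L¹`-distance `‖p - q‖₁` between the distributions `p` and `q` of `g u` for a uniformly
random odd, respectively even, label `u`. The normalisation `2 / N` is that of even `N`. -/
noncomputable def oddEvenDistance (g : Fin N → W) : ℝ :=
  ∑ w, |(2 / (N : ℝ)) * #{u : Fin N | Odd (u : ℕ) ∧ g u = w} -
    (2 / (N : ℝ)) * #{u : Fin N | Even (u : ℕ) ∧ g u = w}|

lemma oddEvenDistance_eq_sum_abs (g : Fin N → W) :
    oddEvenDistance g = 2 / N * ∑ w, |∑ u with g u = w, labelSign u| := by
  simp_rw [oddEvenDistance, ← mul_sub, card_odd_sub_card_even, abs_mul, abs_neg, mul_sum]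
  rw [abs_of_nonneg (by positivity)]

lemma IsTwoToOne.oddEvenDistance_comp_perm (hN : 0 < N) {H : Fin N → W} (hH : IsTwoToOne H)
    (σ : Perm (Fin N)) :
    oddEvenDistance (H ∘ σ) =
      1 + 2 / N * ∑ w ∈ univ.image H, ∏ v with H v = w, labelSign (σ⁻¹ v) := by
  have hσ : IsTwoToOne (H ∘ σ) := hH.comp_equiv σ
  have himage : univ.image (H ∘ σ) = univ.image H := by
    rw [← image_image, image_univ_equiv]
  have hfiber : ∀ w, ∏ u with (H ∘ σ) u = w, labelSign u =
      ∏ v with H v = w, labelSign (σ⁻¹ v) := fun w =>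
    prod_equiv σ (by simp) (by simp)
  have hcard : (2 * #(univ.image H) : ℝ) = N := by
    exact_mod_cast hH.two_mul_card_image.trans (Fintype.card_fin N)
  have hN' : (N : ℝ) ≠ 0 := by positivity
  rw [oddEvenDistance_eq_sum_abs, hσ.sum_abs_sum_fiber labelSign_sq, himage, mul_add,
    sum_congr rfl fun w _ => hfiber w, div_mul_eq_mul_div, hcard, div_self hN']

lemma IsTwoToOne.expect_sq_oddEvenDistance_sub_one_le (hN : 0 < N) {H : Fin N → W}
    (hH : IsTwoToOne H) :
    𝔼 σ : Perm (Fin N), (oddEvenDistance (H ∘ σ) - 1) ^ 2 ≤ 4 / (N : ℝ) := by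
  set X : Perm (Fin N) → ℝ := fun σ => ∑ w ∈ univ.image H, ∏ v with H v = w, labelSign (σ v)
  calc 𝔼 σ : Perm (Fin N), (oddEvenDistance (H ∘ σ) - 1) ^ 2
      = 𝔼 σ, (2 / N * X σ) ^ 2 :=
        Fintype.expect_equiv (Equiv.inv _) _ _ fun σ => by
          rw [hH.oddEvenDistance_comp_perm hN, add_sub_cancel_left, Equiv.inv_apply]
    _ = (2 / N) ^ 2 * 𝔼 σ, X σ ^ 2 := by simp_rw [mul_pow, ← mul_expect]
    _ ≤ (2 / N) ^ 2 * N := by gcongr; exact hH.expect_sq_sum_prod_labelSign_le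
    _ = 4 / N := by field_simp; norm_num

theorem two_to_one_distance_bound_general (hN : 0 < N) {H : Fin N → W} (hH : IsTwoToOne H)
    {t : ℝ} (ht : 1 < t) :
    1 - 4 / ((t - 1) ^ 2 * N) ≤
      (#{σ : Perm (Fin N) | oddEvenDistance (H ∘ σ) ≤ t} : ℝ) / Fintype.card (Perm (Fin N)) := by
  calc 1 - 4 / ((t - 1) ^ 2 * N)
      = 1 - 4 / N / (t - 1) ^ 2 := by rw [div_div, mul_comm]
    _ ≤ 1 - (𝔼 σ : Perm (Fin N), (oddEvenDistance (H ∘ σ) - 1) ^ 2) / (t - 1) ^ 2 := by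
        gcongr
        exact hH.expect_sq_oddEvenDistance_sub_one_le hN
    _ ≤ (#{σ : Perm (Fin N) | oddEvenDistance (H ∘ σ) - 1 ≤ t - 1} : ℝ) /
          Fintype.card (Perm (Fin N)) :=
        one_sub_expect_sq_div_sq_le _ (sub_pos.mpr ht)
    _ = _ := by simp_rw [sub_le_sub_iff_right]

end Labels

end DistanceBound

/-- Reduction from the Collision Problem to testing Orthogonality: for any
two-to-one function `H : Fin N → Fin (3N/2)` with `N` even and large enough,
and a uniformly random permutation `σ` of `Fin N`, the distributions `p` and
`q` obtained by pushing the uniform distributions on odd resp. even labels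
through `H ∘ σ` satisfy `‖p − q‖₁ ≤ 7/4` with probability at least `1/2`. -/
theorem two_to_one_distance_bound :
    ∃ N₀ : ℕ, ∀ N : ℕ, N₀ ≤ N → N % 2 = 0 →
      ∀ H : Fin N → Fin (3 * (N / 2)),
      (∀ w, (∃ u, H u = w) → (Finset.univ.filter (fun u => H u = w)).card = 2) →
      ((Finset.univ.filter (fun σ : Equiv.Perm (Fin N) =>
          ∑ w : Fin (3 * (N / 2)),
            |(2 / (N : ℝ)) *
                ((Finset.univ.filter (fun u : Fin N =>
                  Odd (u : ℕ) ∧ H (σ u) = w)).card : ℝ) -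
              (2 / (N : ℝ)) *
                ((Finset.univ.filter (fun u : Fin N =>
                  Even (u : ℕ) ∧ H (σ u) = w)).card : ℝ)| ≤ 7 / 4)).card : ℝ)
        / (Fintype.card (Equiv.Perm (Fin N)) : ℝ) ≥ 1 / 2 := by
  refine ⟨15, fun N hN _ H hH => le_trans ?_ <|
    two_to_one_distance_bound_general (by lia) hH (t := 7 / 4) (by norm_num)⟩
  have hN' : (15 : ℝ) ≤ N := by exact_mod_cast hN
  rw [le_sub_comm, div_le_iff₀ (by positivity)]
  linarith
end
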